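/- arXiv:math/9701224 — 6 statements merged into one kernel-verified Lean document; each statement's English description precedes it below -/
import Mathlib

section
/- Let (X_n, Y_n) be a generalized urn process with parameters (1, 0, c, 1) where c > 0; that is, with probability X_n/(X_n+Y_n) one has (X_{n+1},Y_{n+1}) = (X_n + 1, Y_n), and with probability Y_n/(X_n+Y_n) one has (X_{n+1},Y_{n+1}) = (X_n + c, Y_n + 1). Then X_n/(c Y_n) − log Y_n converges almost surely to a random limit lying in (−∞, ∞). -/
/-!
Write `W = x / (c y) - log y`.  The one-step drift of `W` and the conditional second moment of its
increment, multiplied by `x + y`, are both at most a constant times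
`x² / y³ + x / y² + 1 / y` on `3 ≤ y` (`urnW_drift`, `urnW_sq_drift`).  There is an explicit
nonnegative function `V` whose drift, multiplied by `x + y`, is at most
`-(x² / y³ + x / y² + 1 / y)` (`urnV_drift`).  Hence for a suitable `λ` the three functions `V`,
`W + λ V` and `√(1 + W²) + λ V` are superharmonic on `3 ≤ y`; for the last one, `√(1 + w²)` has
first and second derivatives bounded by one.

Restricted to a bounded set of initial compositions with `y ≥ 3`, each yields a supermartingale.
`V` is nonnegative and `|W + λ V| ≤ √(1 + W²) + λ V`, so the first two are bounded in `L¹` and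
converge almost surely; hence so does `W` (`IsUrn.converges_on_startSet`).

The restriction `3 ≤ y` is removed by restarting the urn at a later time: the second colour is
drawn with conditional probability at least a multiple of `1 / (n + 1)`, so by the conditional
Borel–Cantelli lemma `Y` almost surely reaches `3` at some time (`IsUrn.eventually_large`).
-/

open MeasureTheory Filter Set

open scoped Classical in
/-- Generalized urn process with real parameters `(a, b, c, d)`: an adapted process
`(Xₙ, Yₙ)` of positive reals such that, conditionally on `ℱ n`, with probability
`Xₙ/(Xₙ+Yₙ)` the step is `(Xₙ+a, Yₙ+b)` and with probability `Yₙ/(Xₙ+Yₙ)` it is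
`(Xₙ+c, Yₙ+d)`. -/
def IsUrn {Ω : Type*} {mΩ : MeasurableSpace Ω} (μ : Measure Ω)
    (ℱ : Filtration ℕ mΩ) (a b c d : ℝ) (X Y : ℕ → Ω → ℝ) : Prop :=
  Adapted ℱ X ∧ Adapted ℱ Y ∧ (∀ n ω, 0 < X n ω) ∧ (∀ n ω, 0 < Y n ω) ∧
    (∀ n ω, (X (n + 1) ω = X n ω + a ∧ Y (n + 1) ω = Y n ω + b) ∨
      (X (n + 1) ω = X n ω + c ∧ Y (n + 1) ω = Y n ω + d)) ∧
    (∀ n, (μ[fun ω => if X (n + 1) ω = X n ω + a ∧ Y (n + 1) ω = Y n ω + b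
        then (1 : ℝ) else 0 | ℱ n]) =ᵐ[μ] fun ω => X n ω / (X n ω + Y n ω)) ∧
    (∀ n, (μ[fun ω => if X (n + 1) ω = X n ω + c ∧ Y (n + 1) ω = Y n ω + d
        then (1 : ℝ) else 0 | ℱ n]) =ᵐ[μ] fun ω => Y n ω / (X n ω + Y n ω))

/-! ### The Lyapunov function -/

/-- The process studied by the theorem, as a function of the composition `(x, y)`. -/
noncomputable def urnW (c x y : ℝ) : ℝ := x / (c * y) - Real.log y

/-- A nonnegative Lyapunov function for the urn, used on `3 ≤ y`.  The falling factorials in the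
denominators make the leading terms of its drift telescope exactly. -/
noncomputable def urnV (c x y : ℝ) : ℝ :=
  x ^ 2 / ((y - 2) * (y - 1) * y) + (6 + 8 * c) * (x / ((y - 1) * y))
    + (2 * (2 * c ^ 2 + (6 + 8 * c) * c + 1)) * (1 / y)

/-- The multiple of `urnV` whose decrease absorbs the drift and the squared increments of `urnW`. -/
noncomputable def urnLam (c : ℝ) : ℝ := 2 + 1 / c + 2 / c ^ 2

lemma urnV_nonneg {c x y : ℝ} (hc : 0 < c) (hx : 0 ≤ x) (hy : 3 ≤ y) : 0 ≤ urnV c x y := by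
  have h2 : 0 < y - 2 := by linarith
  have h1 : 0 < y - 1 := by linarith
  have h0 : 0 < y := by linarith
  unfold urnV
  positivity

/-- The one-step drift of `urnV`, multiplied by `x + y`. -/
lemma urnV_drift {c x y : ℝ} (hc : 0 < c) (hx : 0 < x) (hy : 3 ≤ y) :
    x * urnV c (x + 1) y + y * urnV c (x + c) (y + 1) - (x + y) * urnV c x y
      ≤ -(x ^ 2 / y ^ 3 + x / y ^ 2 + 1 / y) := by
  have h2 : 0 < y - 2 := by linarith
  have h1 : 0 < y - 1 := by linarith
  have h0 : 0 < y := by linarith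
  have h3 : 0 < y + 1 := by linarith
  have e2 : y + 1 - 2 = y - 1 := by ring
  have e1 : y + 1 - 1 = y := by ring
  have key : x * urnV c (x + 1) y + y * urnV c (x + c) (y + 1) - (x + y) * urnV c x y
      = (- (x ^ 2 / ((y - 1) * y * (y + 1))) + x * (1 / ((y - 2) * (y - 1) * y))
          + 2 * c * x * (1 / ((y - 1) * (y + 1))) + c ^ 2 * (1 / ((y - 1) * (y + 1))))
        + (6 + 8 * c) * (- (x * (1 / (y * (y + 1)))) + c * (1 / (y + 1)))
        - (2 * (2 * c ^ 2 + (6 + 8 * c) * c + 1)) * (1 / (y + 1)) := by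
    unfold urnV
    rw [e2, e1]
    field_simp
    ring
  have b1 : x ^ 2 / y ^ 3 ≤ x ^ 2 / ((y - 1) * y * (y + 1)) := by
    apply div_le_div_of_nonneg_left (by positivity) (by positivity)
    nlinarith
  have b2 : 1 / ((y - 2) * (y - 1) * y) ≤ 2 * (1 / y ^ 2) := by
    rw [mul_one_div, div_le_div_iff₀ (by positivity) (by positivity)]
    nlinarith [mul_nonneg h0.le (mul_nonneg (sub_nonneg.2 hy) h0.le)]
  have b3 : 1 / ((y - 1) * (y + 1)) ≤ 2 * (1 / y ^ 2) := by
    rw [mul_one_div, div_le_div_iff₀ (by positivity) (by positivity)]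
    nlinarith
  have b4 : (1 / 2) * (1 / y ^ 2) ≤ 1 / (y * (y + 1)) := by
    rw [one_div_mul_one_div, div_le_div_iff₀ (by positivity) (by positivity)]
    nlinarith
  have b5 : 1 / ((y - 1) * (y + 1)) ≤ 1 / (y + 1) := by
    apply one_div_le_one_div_of_le h3
    nlinarith
  have b6 : 1 / y ≤ 2 * (1 / (y + 1)) := by
    rw [mul_one_div, div_le_div_iff₀ (by positivity) (by positivity)]
    nlinarith
  have b7 : 0 ≤ (c ^ 2 + (6 + 8 * c) * c) * (1 / (y + 1)) + 2 * c ^ 2 * (1 / (y + 1)) := by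
    positivity
  have c2 := mul_le_mul_of_nonneg_left b2 hx.le
  have c3 := mul_le_mul_of_nonneg_left b3 (by positivity : 0 ≤ 2 * c * x)
  have c4 := mul_le_mul_of_nonneg_left b4 (by positivity : 0 ≤ (6 + 8 * c) * x)
  have c5 := mul_le_mul_of_nonneg_left b5 (by positivity : 0 ≤ c ^ 2)
  have hB : x / y ^ 2 = x * (1 / y ^ 2) := by rw [mul_one_div]
  rw [key, hB]
  nlinarith

/-! ### Increments of `X / (c Y) - log Y` -/

lemma log_step_bound {y : ℝ} (hy : 0 < y) :
    |1 / (y + 1) - (Real.log (y + 1) - Real.log y)| ≤ 1 / (y * (y + 1)) := by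
  have h3 : 0 < y + 1 := by linarith
  rw [← Real.log_div h3.ne' hy.ne']
  have hp : 0 < (y + 1) / y := by positivity
  have l1 := Real.one_sub_inv_le_log_of_pos hp
  have l2 := Real.log_le_sub_one_of_pos hp
  have e1 : 1 - ((y + 1) / y)⁻¹ = 1 / (y + 1) := by field_simp; ring
  have e2 : (y + 1) / y - 1 = 1 / (y + 1) + 1 / (y * (y + 1)) := by field_simp; ring
  have : 0 < 1 / (y * (y + 1)) := by positivity
  rw [abs_le]
  constructor <;> linarith

lemma urnW_step_fst {c x y : ℝ} (hc : 0 < c) (hy : 0 < y) :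
    urnW c (x + 1) y - urnW c x y = 1 / (c * y) := by
  unfold urnW
  field_simp
  ring

lemma urnW_step_snd {c x y : ℝ} (hc : 0 < c) (hy : 0 < y) :
    urnW c (x + c) (y + 1) - urnW c x y
      = (1 / (y + 1) - (Real.log (y + 1) - Real.log y)) - x / (c * (y * (y + 1))) := by
  unfold urnW
  have h3 : y + 1 ≠ 0 := by positivity
  have : (x + c) / (c * (y + 1)) - x / (c * y) = 1 / (y + 1) - x / (c * (y * (y + 1))) := by
    field_simp
    ring
  linarith

/-- The drift of `urnW`, multiplied by `x + y`: the first-order terms cancel. -/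
lemma urnW_drift {c x y : ℝ} (hc : 0 < c) (hx : 0 < x) (hy : 0 < y) :
    |x * (urnW c (x + 1) y - urnW c x y) + y * (urnW c (x + c) (y + 1) - urnW c x y)|
      ≤ (1 / c) * (x / y ^ 2) + 1 / y := by
  rw [urnW_step_fst hc hy, urnW_step_snd hc hy]
  have hl := log_step_bound hy
  set e := 1 / (y + 1) - (Real.log (y + 1) - Real.log y)
  have e1 : x * (1 / (c * y)) + y * (e - x / (c * (y * (y + 1))))
      = (1 / c) * (x / (y * (y + 1))) + y * e := by
    field_simp
    ring
  have e2 : y * (1 / (y * (y + 1))) = 1 / (y + 1) := by field_simp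
  have e3 : 1 / (y + 1) ≤ 1 / y := one_div_le_one_div_of_le hy (by linarith)
  have e4 : x / (y * (y + 1)) ≤ x / y ^ 2 :=
    div_le_div_of_nonneg_left hx.le (by positivity) (by nlinarith)
  have e5 := mul_le_mul_of_nonneg_left e4 (by positivity : 0 ≤ 1 / c)
  have e6 := mul_le_mul_of_nonneg_left hl hy.le
  have e7 : 0 ≤ (1 / c) * (x / (y * (y + 1))) := by positivity
  rw [e1]
  refine (abs_add_le _ _).trans ?_
  rw [abs_of_nonneg e7, abs_mul, abs_of_pos hy]
  linarith

/-- The conditional second moment of the increment of `urnW`, multiplied by `x + y`, is bounded by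
multiples of the three terms that appear in `urnV_drift`. -/
lemma urnW_sq_drift {c x y : ℝ} (hc : 0 < c) (hx : 0 < x) (hy : 3 ≤ y) :
    x * (urnW c (x + 1) y - urnW c x y) ^ 2 + y * (urnW c (x + c) (y + 1) - urnW c x y) ^ 2
      ≤ (1 / c ^ 2) * (x / y ^ 2) + (2 / c ^ 2) * (x ^ 2 / y ^ 3) + 2 * (1 / y) := by
  have h0 : 0 < y := by linarith
  rw [urnW_step_fst hc h0, urnW_step_snd hc h0]
  have hl := log_step_bound h0
  set e := 1 / (y + 1) - (Real.log (y + 1) - Real.log y)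
  have l1 : 1 / (y * (y + 1)) ≤ 1 / y := one_div_le_one_div_of_le h0 (by nlinarith)
  have l2 : e ^ 2 ≤ (1 / y) ^ 2 := by
    rw [← sq_abs e]
    exact pow_le_pow_left₀ (abs_nonneg _) (hl.trans l1) 2
  have l3 : (x / (c * (y * (y + 1)))) ^ 2 ≤ (x / (c * y ^ 2)) ^ 2 := by
    refine pow_le_pow_left₀ (by positivity) ?_ 2
    exact div_le_div_of_nonneg_left hx.le (by positivity)
      (mul_le_mul_of_nonneg_left (by nlinarith) hc.le)
  have l4 : (e - x / (c * (y * (y + 1)))) ^ 2 ≤ 2 * (1 / y) ^ 2 + 2 * (x / (c * y ^ 2)) ^ 2 := by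
    nlinarith [sq_nonneg (e + x / (c * (y * (y + 1))))]
  have l5 := mul_le_mul_of_nonneg_left l4 h0.le
  have e1 : x * (1 / (c * y)) ^ 2 = (1 / c ^ 2) * (x / y ^ 2) := by field_simp
  have e2 : y * (2 * (1 / y) ^ 2 + 2 * (x / (c * y ^ 2)) ^ 2)
      = 2 * (1 / y) + (2 / c ^ 2) * (x ^ 2 / y ^ 3) := by field_simp
  linarith

/-! ### Superharmonic functions -/

/-- Second-order upper bound for `w ↦ √(1 + w²)`, with slope at most one in absolute value. -/
lemma sqrt_taylor (w v : ℝ) :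
    √(1 + v ^ 2) ≤ √(1 + w ^ 2) + (w / √(1 + w ^ 2)) * (v - w) + (v - w) ^ 2 / 2 := by
  set s := √(1 + w ^ 2) with hs
  have s2 : s ^ 2 = 1 + w ^ 2 := Real.sq_sqrt (by positivity)
  have s1 : 1 ≤ s := by
    rw [hs]
    exact Real.one_le_sqrt.2 (by nlinarith [sq_nonneg w])
  have s0 : 0 < s := by linarith
  have r2 : √(1 + v ^ 2) ^ 2 = 1 + v ^ 2 := Real.sq_sqrt (by positivity)
  have e : s + (w / s) * (v - w) + (v - w) ^ 2 / (2 * s) = (s ^ 2 + (1 + v ^ 2)) / (2 * s) := by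
    field_simp
    nlinarith
  have h1 : √(1 + v ^ 2) ≤ (s ^ 2 + (1 + v ^ 2)) / (2 * s) := by
    rw [le_div_iff₀ (by positivity)]
    nlinarith [sq_nonneg (√(1 + v ^ 2) - s)]
  have h2 : (v - w) ^ 2 / (2 * s) ≤ (v - w) ^ 2 / 2 :=
    div_le_div_of_nonneg_left (by positivity) (by norm_num) (by linarith)
  linarith

lemma abs_slope_le_one (w : ℝ) : |w / √(1 + w ^ 2)| ≤ 1 := by
  have s0 : 0 < √(1 + w ^ 2) := Real.sqrt_pos.2 (by positivity)
  rw [abs_div, abs_of_pos s0, div_le_one s0]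
  exact Real.abs_le_sqrt (by linarith)

lemma urnLam_pos {c : ℝ} (hc : 0 < c) : 0 < urnLam c := by
  unfold urnLam
  positivity

/-- `W + λ V` is superharmonic for the urn on `3 ≤ y`. -/
lemma urnWV_superharmonic {c x y : ℝ} (hc : 0 < c) (hx : 0 < x) (hy : 3 ≤ y) :
    x * (urnW c (x + 1) y + urnLam c * urnV c (x + 1) y)
        + y * (urnW c (x + c) (y + 1) + urnLam c * urnV c (x + c) (y + 1))
      ≤ (x + y) * (urnW c x y + urnLam c * urnV c x y) := by
  have h0 : 0 < y := by linarith
  have hV := mul_le_mul_of_nonneg_left (urnV_drift hc hx hy) (urnLam_pos hc).le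
  have hW := (abs_le.1 (urnW_drift hc hx h0)).2
  have p1 : 0 ≤ x ^ 2 / y ^ 3 := by positivity
  have p2 : 0 ≤ x / y ^ 2 := by positivity
  have p3 : 0 ≤ 1 / y := by positivity
  have q1 : 0 < 1 / c := by positivity
  have q2 : 0 ≤ 2 / c ^ 2 := by positivity
  have d1 := mul_nonneg (urnLam_pos hc).le p1
  have d2 : (1 / c) * (x / y ^ 2) ≤ urnLam c * (x / y ^ 2) :=
    mul_le_mul_of_nonneg_right (by unfold urnLam; linarith) p2
  have d3 : 1 * (1 / y) ≤ urnLam c * (1 / y) :=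
    mul_le_mul_of_nonneg_right (by unfold urnLam; linarith) p3
  linarith

/-- `√(1 + W²) + λ V` is superharmonic for the urn on `3 ≤ y`. -/
lemma urnSqrt_superharmonic {c x y : ℝ} (hc : 0 < c) (hx : 0 < x) (hy : 3 ≤ y) :
    x * (√(1 + urnW c (x + 1) y ^ 2) + urnLam c * urnV c (x + 1) y)
        + y * (√(1 + urnW c (x + c) (y + 1) ^ 2) + urnLam c * urnV c (x + c) (y + 1))
      ≤ (x + y) * (√(1 + urnW c x y ^ 2) + urnLam c * urnV c x y) := by
  have h0 : 0 < y := by linarith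
  have hV := mul_le_mul_of_nonneg_left (urnV_drift hc hx hy) (urnLam_pos hc).le
  have hW := urnW_drift hc hx h0
  have hQ := urnW_sq_drift hc hx hy
  have t1 := mul_le_mul_of_nonneg_left (sqrt_taylor (urnW c x y) (urnW c (x + 1) y)) hx.le
  have t2 := mul_le_mul_of_nonneg_left (sqrt_taylor (urnW c x y) (urnW c (x + c) (y + 1))) h0.le
  have hκ := abs_slope_le_one (urnW c x y)
  set κ := urnW c x y / √(1 + urnW c x y ^ 2)
  set w := urnW c x y
  set D := x * (urnW c (x + 1) y - w) + y * (urnW c (x + c) (y + 1) - w) with hD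
  have hκD : κ * D ≤ (1 / c) * (x / y ^ 2) + 1 / y := by
    refine (le_abs_self _).trans ?_
    rw [abs_mul]
    exact (mul_le_of_le_one_left (abs_nonneg _) hκ).trans hW
  have hκD' : κ * D = x * (κ * (urnW c (x + 1) y - w))
      + y * (κ * (urnW c (x + c) (y + 1) - w)) := by rw [hD]; ring
  have p1 : 0 ≤ x ^ 2 / y ^ 3 := by positivity
  have p2 : 0 ≤ x / y ^ 2 := by positivity
  have p3 : 0 ≤ 1 / y := by positivity
  have q1 : 0 < 1 / c := by positivity
  have q2 : 0 ≤ 1 / c ^ 2 := by positivity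
  have q3 : 2 / c ^ 2 = 2 * (1 / c ^ 2) := by ring
  have d1 : (1 / c ^ 2) * (x ^ 2 / y ^ 3) ≤ urnLam c * (x ^ 2 / y ^ 3) :=
    mul_le_mul_of_nonneg_right (by unfold urnLam; linarith) p1
  have d2 : (1 / c + 1 / c ^ 2) * (x / y ^ 2) ≤ urnLam c * (x / y ^ 2) :=
    mul_le_mul_of_nonneg_right (by unfold urnLam; linarith) p2
  have d3 : 2 * (1 / y) ≤ urnLam c * (1 / y) :=
    mul_le_mul_of_nonneg_right (by unfold urnLam; linarith) p3
  have d4 := mul_nonneg q2 p2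
  rw [q3] at hQ
  linarith

lemma urnV_superharmonic {c x y : ℝ} (hc : 0 < c) (hx : 0 < x) (hy : 3 ≤ y) :
    x * urnV c (x + 1) y + y * urnV c (x + c) (y + 1) ≤ (x + y) * urnV c x y := by
  have h0 : 0 < y := by linarith
  have h := urnV_drift hc hx hy
  have : 0 ≤ x ^ 2 / y ^ 3 + x / y ^ 2 + 1 / y := by positivity
  linarith

/-! ### From superharmonic functions to supermartingales -/

/-- The filtration seen from time `m` on. -/
def shiftFiltration {Ω : Type*} {mΩ : MeasurableSpace Ω} (ℱ : Filtration ℕ mΩ) (m : ℕ) :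
    Filtration ℕ mΩ where
  seq n := ℱ (m + n)
  mono' _ _ h := ℱ.mono (Nat.add_le_add_left h m)
  le' n := ℱ.le (m + n)

lemma IsUrn.shift {Ω : Type*} {mΩ : MeasurableSpace Ω} {μ : Measure Ω}
    {ℱ : Filtration ℕ mΩ} {a b c d : ℝ} {X Y : ℕ → Ω → ℝ} (h : IsUrn μ ℱ a b c d X Y) (m : ℕ) :
    IsUrn μ (shiftFiltration ℱ m) a b c d (fun n => X (m + n)) (fun n => Y (m + n)) := by
  obtain ⟨hX, hY, hX0, hY0, hstep, h1, h2⟩ := h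
  exact ⟨fun n => hX (m + n), fun n => hY (m + n), fun n => hX0 (m + n), fun n => hY0 (m + n),
    fun n => hstep (m + n), fun n => h1 (m + n), fun n => h2 (m + n)⟩

/-- Deterministic bounds on the composition after `n` steps. -/
lemma IsUrn.bounds {Ω : Type*} {mΩ : MeasurableSpace Ω} {μ : Measure Ω}
    {ℱ : Filtration ℕ mΩ} {c : ℝ} (hc : 0 < c) {X Y : ℕ → Ω → ℝ}
    (h : IsUrn μ ℱ 1 0 c 1 X Y) (n : ℕ) (ω : Ω) :
    Y 0 ω ≤ Y n ω ∧ Y n ω ≤ Y 0 ω + n ∧ X n ω ≤ X 0 ω + n * (1 + c) := by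
  obtain ⟨-, -, -, -, hstep, -, -⟩ := h
  induction n with
  | zero => simp
  | succ n ih =>
    obtain ⟨i1, i2, i3⟩ := ih
    push_cast
    rcases hstep n ω with ⟨e1, e2⟩ | ⟨e1, e2⟩ <;> rw [e1, e2] <;>
      refine ⟨by linarith, by linarith, by nlinarith⟩

/-- The event that the initial composition lies in a fixed bounded region of `3 ≤ y`. -/
def startSet {Ω : Type*} (X Y : ℕ → Ω → ℝ) (K : ℝ) : Set Ω :=
  {ω | X 0 ω ≤ K ∧ 3 ≤ Y 0 ω ∧ Y 0 ω ≤ K}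

lemma measurableSet_startSet {Ω : Type*} {m : MeasurableSpace Ω} {X Y : ℕ → Ω → ℝ}
    (hX : Measurable (X 0)) (hY : Measurable (Y 0)) (K : ℝ) :
    MeasurableSet (startSet X Y K) :=
  (measurableSet_le hX measurable_const).inter
    ((measurableSet_le measurable_const hY).inter (measurableSet_le hY measurable_const))

lemma integrable_indicator_comp {Ω : Type*} {mΩ : MeasurableSpace Ω} {μ : Measure Ω}
    [IsFiniteMeasure μ] {f : ℝ → ℝ → ℝ} (hf : Measurable (Function.uncurry f))
    (hcont : ContinuousOn (Function.uncurry f) (Ici 0 ×ˢ Ici 3))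
    {A : Set Ω} (hA : MeasurableSet A) {u v : Ω → ℝ} (hu : Measurable u) (hv : Measurable v)
    (R : ℝ) (huR : ∀ ω ∈ A, 0 ≤ u ω ∧ u ω ≤ R) (hvR : ∀ ω ∈ A, 3 ≤ v ω ∧ v ω ≤ R) :
    Integrable (A.indicator fun ω => f (u ω) (v ω)) μ := by
  have hcomp : IsCompact (Icc (0 : ℝ) R ×ˢ Icc (3 : ℝ) R) := isCompact_Icc.prod isCompact_Icc
  obtain ⟨B, hB⟩ := hcomp.exists_bound_of_continuousOn
    (hcont.mono (prod_mono Icc_subset_Ici_self Icc_subset_Ici_self))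
  have hm : Measurable (fun ω => f (u ω) (v ω)) := hf.comp (hu.prodMk hv)
  refine Integrable.of_bound (hm.indicator hA).aestronglyMeasurable (max B 0)
    (Eventually.of_forall fun ω => ?_)
  by_cases hω : ω ∈ A
  · rw [indicator_of_mem hω]
    exact (hB (u ω, v ω) ⟨huR ω hω, hvR ω hω⟩).trans (le_max_left _ _)
  · rw [indicator_of_notMem hω, norm_zero]
    exact le_max_right _ _

open scoped Classical in
/-- A function superharmonic for the urn on `3 ≤ y` gives a supermartingale, once the process is
cut down to a bounded set of initial compositions; the cut makes all integrability automatic. -/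
lemma IsUrn.supermartingale {Ω : Type*} {mΩ : MeasurableSpace Ω} {μ : Measure Ω}
    [IsFiniteMeasure μ] {ℱ : Filtration ℕ mΩ} {c : ℝ} (hc : 0 < c) {X Y : ℕ → Ω → ℝ}
    (h : IsUrn μ ℱ 1 0 c 1 X Y) (K : ℝ) {f : ℝ → ℝ → ℝ} (hf : Measurable (Function.uncurry f))
    (hcont : ContinuousOn (Function.uncurry f) (Ici 0 ×ˢ Ici 3))
    (hsup : ∀ x y, 0 < x → 3 ≤ y → x * f (x + 1) y + y * f (x + c) (y + 1) ≤ (x + y) * f x y) :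
    Supermartingale (fun n => (startSet X Y K).indicator fun ω => f (X n ω) (Y n ω)) ℱ μ := by
  have hb := h.bounds hc
  obtain ⟨hX, hY, hX0, hY0, hstep, h1, h2⟩ := h
  have hAm : ∀ n, MeasurableSet[ℱ n] (startSet X Y K) := fun n =>
    ℱ.mono (Nat.zero_le n) _ (measurableSet_startSet (m := ℱ 0) (hX 0) (hY 0) K)
  have hbA : ∀ n, ∀ ω ∈ startSet X Y K,
      (0 ≤ X n ω ∧ X n ω ≤ K + n * (1 + c)) ∧ (3 ≤ Y n ω ∧ Y n ω ≤ K + n) := by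
    rintro n ω ⟨k1, k2, k3⟩
    obtain ⟨i1, i2, i3⟩ := hb n ω
    exact ⟨⟨(hX0 n ω).le, by linarith⟩, by linarith, by linarith⟩
  have hint : ∀ (n : ℕ) (s t : ℝ), 0 ≤ s → 0 ≤ t → Integrable
      ((startSet X Y K).indicator fun ω => f (X n ω + s) (Y n ω + t)) μ := by
    intro n s t hs ht
    have hn : (0 : ℝ) ≤ n * c := by positivity
    refine integrable_indicator_comp hf hcont (ℱ.le n _ (hAm n))
      ((hX.measurable (i := n)).add_const s) ((hY.measurable (i := n)).add_const t)
      (K + n * (1 + c) + s + t) ?_ ?_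
    · intro ω hω
      have := hbA n ω hω
      constructor <;> linarith [this.1.1, this.1.2]
    · intro ω hω
      have := hbA n ω hω
      constructor <;> linarith [this.2.1, this.2.2]
  have hint0 : ∀ n, Integrable ((startSet X Y K).indicator fun ω => f (X n ω) (Y n ω)) μ := by
    intro n
    simpa using hint n 0 0 le_rfl le_rfl
  have hmeas : ∀ (n : ℕ) (s t : ℝ), StronglyMeasurable[ℱ n]
      ((startSet X Y K).indicator fun ω => f (X n ω + s) (Y n ω + t)) := by
    intro n s t
    refine Measurable.stronglyMeasurable ?_
    refine Measurable.indicator ?_ (hAm n)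
    exact hf.comp (((hX n).add_const s).prodMk ((hY n).add_const t))
  have hInd : ∀ (n : ℕ) (s t : ℝ), Measurable
      (fun ω => if X (n + 1) ω = X n ω + s ∧ Y (n + 1) ω = Y n ω + t then (1 : ℝ) else 0) := by
    intro n s t
    refine Measurable.ite ?_ measurable_const measurable_const
    exact (measurableSet_eq_fun hX.measurable (hX.measurable.add_const s)).inter
      (measurableSet_eq_fun hY.measurable (hY.measurable.add_const t))
  have hIndInt : ∀ (n : ℕ) (s t : ℝ), Integrable
      (fun ω => if X (n + 1) ω = X n ω + s ∧ Y (n + 1) ω = Y n ω + t then (1 : ℝ) else 0) μ := by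
    intro n s t
    refine Integrable.of_bound (hInd n s t).aestronglyMeasurable 1
      (Eventually.of_forall fun ω => ?_)
    split_ifs <;> simp
  have hprod : ∀ (n : ℕ) (s t : ℝ), 0 ≤ s → 0 ≤ t → Integrable
      (((startSet X Y K).indicator fun ω => f (X n ω + s) (Y n ω + t)) *
      (fun ω => if X (n + 1) ω = X n ω + s ∧ Y (n + 1) ω = Y n ω + t then (1 : ℝ) else 0)) μ := by
    intro n s t hs ht
    refine (hint n s t hs ht).mono
      ((hint n s t hs ht).aestronglyMeasurable.mul (hInd n s t).aestronglyMeasurable)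
      (Eventually.of_forall fun ω => ?_)
    simp only [Pi.mul_apply]
    split_ifs <;> simp
  refine supermartingale_nat (fun n => by simpa using hmeas n 0 0) hint0 fun n => ?_
  -- The next value, split according to which of the two steps is taken.
  have hsplit : ((startSet X Y K).indicator fun ω => f (X (n + 1) ω) (Y (n + 1) ω)) =
      ((startSet X Y K).indicator fun ω => f (X n ω + 1) (Y n ω + 0)) *
        (fun ω => if X (n + 1) ω = X n ω + 1 ∧ Y (n + 1) ω = Y n ω + 0 then (1 : ℝ) else 0) +
      ((startSet X Y K).indicator fun ω => f (X n ω + c) (Y n ω + 1)) *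
        (fun ω => if X (n + 1) ω = X n ω + c ∧ Y (n + 1) ω = Y n ω + 1
          then (1 : ℝ) else 0) := by
    funext ω
    simp only [Pi.add_apply, Pi.mul_apply]
    by_cases hω : ω ∈ startSet X Y K
    · simp only [indicator_of_mem hω]
      rcases hstep n ω with ⟨e1, e2⟩ | ⟨e1, e2⟩
      · have hne : ¬ (X (n + 1) ω = X n ω + c ∧ Y (n + 1) ω = Y n ω + 1) := by
          rintro ⟨-, e⟩
          linarith
        rw [if_pos ⟨e1, e2⟩, if_neg hne, e1, e2]
        ring
      · have hne : ¬ (X (n + 1) ω = X n ω + 1 ∧ Y (n + 1) ω = Y n ω + 0) := by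
          rintro ⟨-, e⟩
          linarith
        rw [if_neg hne, if_pos ⟨e1, e2⟩, e1, e2]
        ring
    · simp only [indicator_of_notMem hω]
      ring
  have ha := condExp_add (hprod n 1 0 zero_le_one le_rfl) (hprod n c 1 hc.le zero_le_one) (ℱ n)
  have hp1 := condExp_mul_of_stronglyMeasurable_left (hmeas n 1 0)
    (hprod n 1 0 zero_le_one le_rfl) (hIndInt n 1 0)
  have hp2 := condExp_mul_of_stronglyMeasurable_left (hmeas n c 1)
    (hprod n c 1 hc.le zero_le_one) (hIndInt n c 1)
  simp only [hsplit]
  filter_upwards [ha, hp1, hp2, h1 n, h2 n] with ω ea e1 e2 e3 e4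
  rw [ea, Pi.add_apply, e1, e2, Pi.mul_apply, Pi.mul_apply, e3, e4]
  by_cases hω : ω ∈ startSet X Y K
  · simp only [indicator_of_mem hω, add_zero]
    have hs := hsup (X n ω) (Y n ω) (hX0 n ω) (hbA n ω hω).2.1
    have hpos : 0 < X n ω + Y n ω := add_pos (hX0 n ω) (hY0 n ω)
    rw [mul_div_assoc', mul_div_assoc', ← add_div, div_le_iff₀ hpos]
    linarith
  · simp only [indicator_of_notMem hω]
    simp

/-- A supermartingale dominated in absolute value by another supermartingale is bounded in `L¹`,
hence converges almost surely. -/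
lemma supermartingale_converges {Ω : Type*} {mΩ : MeasurableSpace Ω} {μ : Measure Ω}
    [IsFiniteMeasure μ] {ℱ : Filtration ℕ mΩ} {Z S : ℕ → Ω → ℝ}
    (hZ : Supermartingale Z ℱ μ) (hS : Supermartingale S ℱ μ) (hZS : ∀ n ω, |Z n ω| ≤ S n ω) :
    ∀ᵐ ω ∂μ, ∃ L, Tendsto (fun n => Z n ω) atTop (nhds L) := by
  have hbdd : ∀ n, eLpNorm ((-Z) n) 1 μ ≤ ((∫ ω, S 0 ω ∂μ).toNNReal : ENNReal) := by
    intro n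
    rw [Pi.neg_apply, eLpNorm_neg, eLpNorm_one_eq_lintegral_enorm,
      ← ofReal_integral_norm_eq_lintegral_enorm (hZ.integrable n)]
    refine ENNReal.ofReal_le_ofReal ?_
    have h1 : ∫ ω, ‖Z n ω‖ ∂μ ≤ ∫ ω, S n ω ∂μ :=
      integral_mono (hZ.integrable n).norm (hS.integrable n) (hZS n)
    have h2 := hS.setIntegral_le (Nat.zero_le n) MeasurableSet.univ
    rw [setIntegral_univ, setIntegral_univ] at h2
    exact h1.trans h2
  filter_upwards [hZ.neg.exists_ae_tendsto_of_bdd hbdd] with ω ⟨L, hL⟩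
  exact ⟨-L, by simpa using hL.neg⟩

/-! ### Convergence -/

lemma measurable_urnW (c : ℝ) : Measurable (Function.uncurry (urnW c)) := by
  unfold Function.uncurry urnW
  fun_prop

lemma measurable_urnV (c : ℝ) : Measurable (Function.uncurry (urnV c)) := by
  unfold Function.uncurry urnV
  fun_prop

lemma continuousOn_urnW {c : ℝ} (hc : 0 < c) :
    ContinuousOn (Function.uncurry (urnW c)) (Ici 0 ×ˢ Ici 3) := by
  have h3 : ∀ p ∈ (Ici (0 : ℝ) ×ˢ Ici (3 : ℝ)), 0 < p.2 := by
    rintro p ⟨-, hp⟩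
    have : (3 : ℝ) ≤ p.2 := hp
    linarith
  unfold Function.uncurry urnW
  refine ContinuousOn.sub (ContinuousOn.div (by fun_prop) (by fun_prop) fun p hp => ?_)
    (ContinuousOn.log (by fun_prop) fun p hp => (h3 p hp).ne')
  exact (mul_pos hc (h3 p hp)).ne'

lemma continuousOn_urnV (c : ℝ) :
    ContinuousOn (Function.uncurry (urnV c)) (Ici 0 ×ˢ Ici 3) := by
  have h3 : ∀ p ∈ (Ici (0 : ℝ) ×ˢ Ici (3 : ℝ)), p.2 ≠ 0 ∧ p.2 - 1 ≠ 0 ∧ p.2 - 2 ≠ 0 := by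
    rintro p ⟨-, hp⟩
    have : (3 : ℝ) ≤ p.2 := hp
    refine ⟨?_, ?_, ?_⟩ <;> apply ne_of_gt <;> linarith
  unfold Function.uncurry urnV
  refine ContinuousOn.add (ContinuousOn.add
    (ContinuousOn.div (by fun_prop) (by fun_prop) fun p hp => ?_)
    (ContinuousOn.mul (by fun_prop)
      (ContinuousOn.div (by fun_prop) (by fun_prop) fun p hp => ?_)))
    (ContinuousOn.mul (by fun_prop)
      (ContinuousOn.div (by fun_prop) (by fun_prop) fun p hp => ?_))
  · obtain ⟨a, b, d⟩ := h3 p hp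
    exact mul_ne_zero (mul_ne_zero d b) a
  · obtain ⟨a, b, d⟩ := h3 p hp
    exact mul_ne_zero b a
  · exact (h3 p hp).1

/-- Convergence on the event that the urn starts in a bounded region of `3 ≤ y`. -/
lemma IsUrn.converges_on_startSet {Ω : Type*} {mΩ : MeasurableSpace Ω} {μ : Measure Ω}
    [IsFiniteMeasure μ] {ℱ : Filtration ℕ mΩ} {c : ℝ} (hc : 0 < c) {X Y : ℕ → Ω → ℝ}
    (h : IsUrn μ ℱ 1 0 c 1 X Y) (K : ℝ) :
    ∀ᵐ ω ∂μ, ω ∈ startSet X Y K →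
      ∃ L, Tendsto (fun n => urnW c (X n ω) (Y n ω)) atTop (nhds L) := by
  have mW := measurable_urnW c
  have mV := measurable_urnV c
  have cW := continuousOn_urnW hc
  have cV := continuousOn_urnV c
  have mS : Measurable fun p => √(1 + Function.uncurry (urnW c) p ^ 2) :=
    ((mW.pow_const 2).const_add 1).sqrt
  have sV := h.supermartingale hc K mV cV fun x y hx hy => urnV_superharmonic hc hx hy
  have sZ := h.supermartingale hc K (f := fun x y => urnW c x y + urnLam c * urnV c x y)
    (mW.add (mV.const_mul _)) (cW.add (continuousOn_const.mul cV))
    fun x y hx hy => urnWV_superharmonic hc hx hy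
  have sS := h.supermartingale hc K
    (f := fun x y => √(1 + urnW c x y ^ 2) + urnLam c * urnV c x y)
    (mS.add (mV.const_mul _))
    ((continuousOn_const.add (cW.pow 2)).sqrt.add (continuousOn_const.mul cV))
    fun x y hx hy => urnSqrt_superharmonic hc hx hy
  have hV0 : ∀ n, ∀ ω ∈ startSet X Y K, 0 ≤ urnV c (X n ω) (Y n ω) := fun n ω hω =>
    urnV_nonneg hc (h.2.2.1 n ω).le (hω.2.1.trans (h.bounds hc n ω).1)
  have convV := supermartingale_converges sV sV fun n ω => by
    by_cases hω : ω ∈ startSet X Y K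
    · simp only [indicator_of_mem hω, abs_of_nonneg (hV0 n ω hω), le_refl]
    · simp only [indicator_of_notMem hω, abs_zero, le_refl]
  have convZ := supermartingale_converges sZ sS fun n ω => by
    by_cases hω : ω ∈ startSet X Y K
    · simp only [indicator_of_mem hω]
      have hl : 0 ≤ urnLam c * urnV c (X n ω) (Y n ω) :=
        mul_nonneg (urnLam_pos hc).le (hV0 n ω hω)
      refine (abs_add_le _ _).trans ?_
      rw [abs_of_nonneg hl]
      exact add_le_add_left (Real.abs_le_sqrt (by linarith)) _
    · simp only [indicator_of_notMem hω, abs_zero, le_refl]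
  filter_upwards [convV, convZ] with ω ⟨L₁, h₁⟩ ⟨L₂, h₂⟩ hω
  simp only [indicator_of_mem hω] at h₁ h₂
  exact ⟨L₂ - urnLam c * L₁, by simpa using h₂.sub (h₁.const_mul (urnLam c))⟩

open scoped Classical in
/-- The second colour is in fact drawn infinitely often: its conditional probabilities are at
least of order `1/n`, so the conditional Borel–Cantelli lemma applies. -/
lemma IsUrn.eventually_large {Ω : Type*} {mΩ : MeasurableSpace Ω} {μ : Measure Ω}
    [IsFiniteMeasure μ] {ℱ : Filtration ℕ mΩ} {c : ℝ} (hc : 0 < c) {X Y : ℕ → Ω → ℝ}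
    (h : IsUrn μ ℱ 1 0 c 1 X Y) : ∀ᵐ ω ∂μ, ∃ m, 3 ≤ Y m ω := by
  have hb := h.bounds hc
  have hmono : ∀ m k ω, Y m ω ≤ Y (m + k) ω := fun m k ω => ((h.shift m).bounds hc k ω).1
  obtain ⟨hX, hY, hX0, hY0, hstep, h1, h2⟩ := h
  let s : ℕ → Set Ω := fun n => {ω | X n ω = X (n - 1) ω + c ∧ Y n ω = Y (n - 1) ω + 1}
  have hs : ∀ n, MeasurableSet[ℱ n] (s n) := by
    intro n
    have hX' := hX.measurable_le (Nat.sub_le n 1)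
    have hY' := hY.measurable_le (Nat.sub_le n 1)
    exact (measurableSet_eq_fun (hX n) (hX'.add_const c)).inter
      (measurableSet_eq_fun (hY n) (hY'.add_const 1))
  have hs' : ∀ k, (s (k + 1)).indicator (1 : Ω → ℝ) =
      fun ω => if X (k + 1) ω = X k ω + c ∧ Y (k + 1) ω = Y k ω + 1 then (1 : ℝ) else 0 := by
    intro k
    funext ω
    simp only [s, indicator_apply, mem_ofPred_eq, Nat.add_sub_cancel, Pi.one_apply]
  filter_upwards [ae_mem_limsup_atTop_iff μ hs, ae_all_iff.2 h2] with ω hω hprob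
  have hlim : ω ∈ limsup s atTop := by
    rw [hω]
    simp only [hs', hprob]
    set C := X 0 ω + Y 0 ω + (2 + c) with hC
    have hC0 : 0 < C := by linarith [hX0 0 ω, hY0 0 ω]
    have hd := Real.tendsto_sum_range_one_div_nat_succ_atTop.const_mul_atTop
      (div_pos (hY0 0 ω) hC0)
    refine tendsto_atTop_mono (fun n => ?_) hd
    rw [Finset.mul_sum]
    refine Finset.sum_le_sum fun k _ => ?_
    obtain ⟨i1, i2, i3⟩ := hb k ω
    have hk : (0 : ℝ) ≤ k := k.cast_nonneg
    have hpos : 0 < X k ω + Y k ω := add_pos (hX0 k ω) (hY0 k ω)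
    have hle : X k ω + Y k ω ≤ C * (k + 1) := by
      have := mul_nonneg hk (add_pos (hX0 0 ω) (hY0 0 ω)).le
      rw [hC]
      nlinarith
    rw [div_mul_div_comm, mul_one]
    exact div_le_div₀ (hY0 k ω).le i1 hpos hle
  rw [mem_limsup_iff_frequently_mem] at hlim
  have hall : ∀ j : ℕ, ∃ m, (j : ℝ) ≤ Y m ω := by
    intro j
    induction j with
    | zero => exact ⟨0, by simpa using (hY0 0 ω).le⟩
    | succ j ih =>
      obtain ⟨m, hm⟩ := ih
      obtain ⟨n, hn, hsn⟩ := (frequently_atTop.1 hlim) (m + 1)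
      obtain ⟨k, rfl⟩ := Nat.exists_eq_add_of_le hn
      refine ⟨m + 1 + k, ?_⟩
      have e : m + 1 + k - 1 = m + k := by omega
      have e2 := hsn.2
      rw [e] at e2
      rw [e2]
      push_cast
      linarith [hmono m k ω]
  simpa using hall 3

/-- **Theorem (urn 2)**: For the generalized urn process with parameters `(1, 0, c, 1)`,
`c > 0`, the quantity `Xₙ/(c Yₙ) − log Yₙ` converges almost surely to a random limit in
`(−∞, ∞)`. -/
theorem urn_second_order_converges
    {Ω : Type*} {mΩ : MeasurableSpace Ω} (μ : Measure Ω) [IsProbabilityMeasure μ]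
    (ℱ : Filtration ℕ mΩ) (c : ℝ) (hc : 0 < c)
    (X Y : ℕ → Ω → ℝ) (hXY : IsUrn μ ℱ 1 0 c 1 X Y) :
    ∀ᵐ ω ∂μ, ∃ L : ℝ,
      Tendsto (fun n => X n ω / (c * Y n ω) - Real.log (Y n ω)) atTop (nhds L) := by
  have hconv : ∀ᵐ ω ∂μ, ∀ m K : ℕ,
      ω ∈ startSet (fun n => X (m + n)) (fun n => Y (m + n)) K →
      ∃ L, Tendsto (fun n => urnW c (X (m + n) ω) (Y (m + n) ω)) atTop (nhds L) :=
    ae_all_iff.2 fun m => ae_all_iff.2 fun K => (hXY.shift m).converges_on_startSet hc K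
  -- Almost every path lies in one of the countably many start sets, for some restart time `m`.
  filter_upwards [hconv, hXY.eventually_large hc] with ω hω ⟨m, hm⟩
  obtain ⟨K, hK⟩ := exists_nat_ge (max (X m ω) (Y m ω))
  obtain ⟨L, hL⟩ := hω m K ⟨(le_max_left _ _).trans hK, hm, (le_max_right _ _).trans hK⟩
  refine ⟨L, ?_⟩
  rw [← tendsto_add_atTop_iff_nat m]
  simpa only [urnW, add_comm m] using hL
end

section
/- Let (X_n, Y_n) be a generalized urn process with nonnegative parameters (a,b,c,d) satisfying (a + c)(b + d) > 0. Then min{X_n, Y_n} → ∞ almost surely. -/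
/-!
Both kinds of step occur infinitely often almost surely. Indeed the parameters are nonnegative, so
`Xₙ ≥ X₀ > 0`, while the total `Xₙ + Yₙ` grows at most linearly; hence the conditional
probabilities `Xₙ / (Xₙ + Yₙ)` dominate a multiple of the harmonic series and their sum diverges.
Lévy's conditional Borel–Cantelli lemma (`ae_mem_limsup_atTop_iff`) then gives infinitely many steps
of the first kind (`ae_frequently_mem_of_condExp`), and by symmetry of the second kind.
Since `a + c > 0`, one of the two kinds adds a fixed positive amount to the monotone sequence `Xₙ`,
which therefore tends to infinity (`tendsto_atTop_of_frequently_add`); likewise for `Yₙ` from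
`b + d > 0`.
-/

open MeasureTheory Filter Set

theorem tendsto_atTop_of_frequently_add {x : ℕ → ℝ} (hx : Monotone x) {δ : ℝ} (hδ : 0 < δ)
    (h : ∃ᶠ n in atTop, x (n + 1) = x n + δ) : Tendsto x atTop atTop := by
  rcases tendsto_atTop_of_monotone hx with h1 | ⟨l, hl⟩
  · exact h1
  · exfalso
    have h2 : Tendsto (fun n => x (n + 1) - x n) atTop (nhds 0) := by
      simpa using ((tendsto_add_atTop_iff_nat 1).2 hl).sub hl
    obtain ⟨n, hn, hn'⟩ := (h.and_eventually (h2.eventually (gt_mem_nhds hδ))).exists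
    linarith

/-- If the ratio `u n / t n` has nondecreasing positive numerator and a positive denominator of at
most linear growth, its partial sums diverge, by comparison with the harmonic series. -/
theorem tendsto_sum_div_atTop {u t : ℕ → ℝ} {M : ℝ} (hM : 0 ≤ M) (hu : Monotone u)
    (hu0 : 0 < u 0) (ht : ∀ n, 0 < t n) (htM : ∀ n, t (n + 1) ≤ t n + M) :
    Tendsto (fun n => ∑ k ∈ Finset.range n, u k / t k) atTop atTop := by
  have hlin : ∀ n : ℕ, t n ≤ t 0 + n * M := by
    intro n
    induction n with
    | zero => simp
    | succ n ih => push_cast; linarith [htM n]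
  have hK : 0 < t 0 + M := by linarith [ht 0]
  refine tendsto_atTop_mono (fun n => ?_)
    (Real.tendsto_sum_range_one_div_nat_succ_atTop.const_mul_atTop (div_pos hu0 hK))
  rw [Finset.mul_sum]
  refine Finset.sum_le_sum fun k _ => ?_
  rw [div_mul_div_comm, mul_one]
  have hk : (0 : ℝ) ≤ k := k.cast_nonneg
  refine div_le_div₀ (hu0.le.trans (hu k.zero_le)) (hu k.zero_le) (ht k) ?_
  nlinarith [hlin k, mul_nonneg hk (ht 0).le]

/-- Conditional Borel–Cantelli for events `E n` decided at time `n + 1` whose conditional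
probability given time `n` is `U n / T n`, with `U` positive and nondecreasing and `T` of at most
linear growth. -/
theorem ae_frequently_mem_of_condExp {Ω : Type*} {mΩ : MeasurableSpace Ω} (μ : Measure Ω)
    [IsProbabilityMeasure μ] (ℱ : Filtration ℕ mΩ) {E : ℕ → Set Ω} {U T : ℕ → Ω → ℝ} {M : ℝ}
    (hM : 0 ≤ M) (hE : ∀ n, MeasurableSet[ℱ (n + 1)] (E n))
    (hU : ∀ ω, Monotone fun n => U n ω) (hU0 : ∀ ω, 0 < U 0 ω)
    (hT : ∀ n ω, 0 < T n ω) (hTM : ∀ n ω, T (n + 1) ω ≤ T n ω + M)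
    (hcond : ∀ n, μ[(E n).indicator 1 | ℱ n] =ᵐ[μ] fun ω => U n ω / T n ω) :
    ∀ᵐ ω ∂μ, ∃ᶠ n in atTop, ω ∈ E n := by
  -- Shift the index so that the `n`-th event is `ℱ n`-measurable; the value at `0` is irrelevant.
  let s : ℕ → Set Ω := fun n => Nat.casesOn n ∅ E
  have hs : ∀ n, MeasurableSet[ℱ n] (s n) := by
    rintro (_ | n)
    · exact @MeasurableSet.empty _ (ℱ 0)
    · exact hE n
  filter_upwards [ae_mem_limsup_atTop_iff μ hs, ae_all_iff.2 hcond] with ω hω hc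
  have hsum : Tendsto (fun n => ∑ k ∈ Finset.range n,
      (μ[(s (k + 1)).indicator (1 : Ω → ℝ) | ℱ k]) ω) atTop atTop := by
    refine (tendsto_sum_div_atTop hM (hU ω) (hU0 ω) (fun n => hT n ω)
      (fun n => hTM n ω)).congr fun n => ?_
    exact Finset.sum_congr rfl fun k _ => (hc k).symm
  have hfreq := mem_limsup_iff_frequently_mem.1 (hω.2 hsum)
  rw [frequently_atTop] at hfreq ⊢
  intro N
  obtain ⟨m, hm, hmem⟩ := hfreq (N + 1)
  obtain ⟨k, rfl⟩ := Nat.exists_eq_add_of_le' (Nat.one_le_of_lt hm)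
  exact ⟨k, by omega, hmem⟩

/-- **Lemma (to infinity)**: For a generalized urn process with nonnegative parameters
`(a, b, c, d)` satisfying `(a + c)(b + d) > 0`, `min {Xₙ, Yₙ} → ∞` almost surely. -/
theorem urn_min_tendsto_atTop
    {Ω : Type*} {mΩ : MeasurableSpace Ω} (μ : Measure Ω) [IsProbabilityMeasure μ]
    (ℱ : Filtration ℕ mΩ) (a b c d : ℝ)
    (ha : 0 ≤ a) (hb : 0 ≤ b) (hc : 0 ≤ c) (hd : 0 ≤ d)
    (habcd : 0 < (a + c) * (b + d))
    (X Y : ℕ → Ω → ℝ) (hXY : IsUrn μ ℱ a b c d X Y) :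
    ∀ᵐ ω ∂μ, Tendsto (fun n => min (X n ω) (Y n ω)) atTop atTop := by
  obtain ⟨hX, hY, hXpos, hYpos, hstep, hA, hB⟩ := hXY
  have hXm : ∀ ω, Monotone fun n => X n ω := fun ω => monotone_nat_of_le_succ fun n => by
    rcases hstep n ω with h | h <;> linarith [h.1]
  have hYm : ∀ ω, Monotone fun n => Y n ω := fun ω => monotone_nat_of_le_succ fun n => by
    rcases hstep n ω with h | h <;> linarith [h.2]
  have hM : 0 ≤ a + b + c + d := by positivity
  have hT : ∀ n ω, 0 < X n ω + Y n ω := fun n ω => add_pos (hXpos n ω) (hYpos n ω)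
  have hTM : ∀ n ω, X (n + 1) ω + Y (n + 1) ω ≤ X n ω + Y n ω + (a + b + c + d) := by
    intro n ω
    rcases hstep n ω with h | h <;> linarith [h.1, h.2]
  have hmeas : ∀ (p q : ℝ) (n : ℕ), MeasurableSet[ℱ (n + 1)]
      {ω | X (n + 1) ω = X n ω + p ∧ Y (n + 1) ω = Y n ω + q} := by
    intro p q n
    have hXn : Measurable[ℱ (n + 1)] (X n) := (hX n).mono (ℱ.mono n.le_succ) le_rfl
    have hYn : Measurable[ℱ (n + 1)] (Y n) := (hY n).mono (ℱ.mono n.le_succ) le_rfl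
    exact (measurableSet_eq_fun (m := ℱ (n + 1)) (hX (n + 1)) (hXn.add_const p)).inter
      (measurableSet_eq_fun (m := ℱ (n + 1)) (hY (n + 1)) (hYn.add_const q))
  have hind : ∀ (p q : ℝ) (n : ℕ),
      {ω | X (n + 1) ω = X n ω + p ∧ Y (n + 1) ω = Y n ω + q}.indicator (1 : Ω → ℝ) =
      fun ω => open scoped Classical in
        if X (n + 1) ω = X n ω + p ∧ Y (n + 1) ω = Y n ω + q then (1 : ℝ) else 0 := by
    intro p q n
    ext ω
    simp [Set.indicator_apply]
  have hioA := ae_frequently_mem_of_condExp μ ℱ hM (hmeas a b) hXm (hXpos 0) hT hTM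
    (fun n => by rw [hind]; exact hA n)
  have hioB := ae_frequently_mem_of_condExp μ ℱ hM (hmeas c d) hYm (hYpos 0) hT hTM
    (fun n => by rw [hind]; exact hB n)
  have hac : 0 < a + c := pos_of_mul_pos_left habcd (by positivity)
  have hbd : 0 < b + d := pos_of_mul_pos_right habcd (by positivity)
  filter_upwards [hioA, hioB] with ω h1 h2
  refine tendsto_atTop.2 fun K => ?_
  have hXt : Tendsto (fun n => X n ω) atTop atTop := by
    rcases ha.lt_or_eq with h | h
    · exact tendsto_atTop_of_frequently_add (hXm ω) h (h1.mono fun n hn => hn.1)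
    · exact tendsto_atTop_of_frequently_add (hXm ω) (by linarith : 0 < c)
        (h2.mono fun n hn => hn.1)
  have hYt : Tendsto (fun n => Y n ω) atTop atTop := by
    rcases hb.lt_or_eq with h | h
    · exact tendsto_atTop_of_frequently_add (hYm ω) h (h1.mono fun n hn => hn.2)
    · exact tendsto_atTop_of_frequently_add (hYm ω) (by linarith : 0 < d)
        (h2.mono fun n hn => hn.2)
  filter_upwards [hXt.eventually_ge_atTop K, hYt.eventually_ge_atTop K] with n hx hy
  exact le_min hx hy
end

section
/- Let (Z_n : n ≥ 0) be a sequence of integrable real random variables adapted to a filtration (F_n). Define Δ_n = E(Z_{n+1} − Z_n | F_n) and Q_n = E((Z_{n+1} − Z_n)² | F_n). Then Z_n converges almost surely to a finite limit on the event {Σ_n |Δ_n| < ∞ and Σ_n Q_n < ∞}. -/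
/-!
Localization by the conditional second moments reduces the claim to the convergence of
`L²`-bounded martingales.

Fix `K` and let `A n = {∑_{k ≤ n} Q k ≤ K}`, an `ℱ n`-measurable event. The truncated increment
`X n = 1_{A n} (Z (n+1) - Z n)` satisfies `∫ (X n)² = ∫_{A n} Q n`, and pointwise
`∑ n, 1_{A n} Q n ≤ K`, so the second moments of the `X n` sum to at most `K`
(`truncated_sum_le`). Centering `X n` at its conditional expectation given `ℱ n` does not increase
the second moment, and the centered variables are orthogonal (`integral_sq_add`); their partial
sums form a martingale whose second moments are at most `K`, hence they converge almost surely
(`ae_tendsto_sum_of_centered`). On `{∑ Q ≤ K}` the truncation has no effect and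
`E(X n | ℱ n) = Δ n`, so `Z n = Z 0 + martingale + ∑_{k < n} Δ k` converges wherever moreover
`∑ |Δ k| < ∞`. The event `{∑ Q < ∞}` is the union over `K : ℕ` of the events `{∑ Q ≤ K}`.
-/

open MeasureTheory Filter Set
open scoped ENNReal

/-- Pythagoras: an `m`-measurable `f` is orthogonal in `L²` to any `g` with `E(g | m) = 0`. -/
lemma integral_sq_add {Ω : Type*} {m mΩ : MeasurableSpace Ω} {μ : Measure Ω}
    [IsProbabilityMeasure μ] (hm : m ≤ mΩ) {f g : Ω → ℝ} (hfm : StronglyMeasurable[m] f)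
    (hf : MemLp f 2 μ) (hg : MemLp g 2 μ) (hg0 : μ[g | m] =ᵐ[μ] 0) :
    ∫ ω, (f ω + g ω) ^ 2 ∂μ = ∫ ω, f ω ^ 2 ∂μ + ∫ ω, g ω ^ 2 ∂μ := by
  have hfg : Integrable (f * g) μ := hf.integrable_mul hg
  have h0 : ∫ ω, f ω * g ω ∂μ = 0 := by
    have h1 : μ[f * g | m] =ᵐ[μ] 0 := by
      filter_upwards [condExp_mul_of_stronglyMeasurable_left hfm hfg (hg.integrable (by norm_num)),
        hg0] with ω h1 h2
      rw [h1, Pi.mul_apply, h2]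
      simp
    calc ∫ ω, f ω * g ω ∂μ = ∫ ω, (μ[f * g | m]) ω ∂μ := (integral_condExp hm).symm
      _ = 0 := by rw [integral_congr_ae h1]; simp
  have e : (fun ω => (f ω + g ω) ^ 2) = fun ω => (f ω ^ 2 + g ω ^ 2) + 2 * (f ω * g ω) := by
    funext ω; ring
  have hi : Integrable (fun ω => f ω ^ 2 + g ω ^ 2) μ := hf.integrable_sq.add hg.integrable_sq
  have hi' : Integrable (fun ω => 2 * (f ω * g ω)) μ := hfg.const_mul 2
  rw [e, integral_add hi hi', integral_add hf.integrable_sq hg.integrable_sq, integral_const_mul, h0]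
  simp

/-- Partial sums of square-integrable martingale differences with summable second moments
converge almost surely, because they form an `L²`-bounded martingale. -/
lemma ae_tendsto_sum_of_centered {Ω : Type*} {mΩ : MeasurableSpace Ω} {μ : Measure Ω}
    [IsProbabilityMeasure μ] (ℱ : Filtration ℕ mΩ) (Y : ℕ → Ω → ℝ)
    (hYm : ∀ n, StronglyMeasurable[ℱ (n + 1)] (Y n)) (hY : ∀ n, MemLp (Y n) 2 μ)
    (hY0 : ∀ n, μ[Y n | ℱ n] =ᵐ[μ] 0) (C : ℝ)
    (hC : ∀ n, ∑ k ∈ Finset.range n, ∫ ω, Y k ω ^ 2 ∂μ ≤ C) :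
    ∀ᵐ ω ∂μ, ∃ c, Tendsto (fun n => ∑ k ∈ Finset.range n, Y k ω) atTop (nhds c) := by
  let M : ℕ → Ω → ℝ := fun n ω => ∑ k ∈ Finset.range n, Y k ω
  have hMm : ∀ n, StronglyMeasurable[ℱ n] (M n) := fun n =>
    Finset.stronglyMeasurable_fun_sum _ fun k hk =>
      (hYm k).mono (ℱ.mono (Finset.mem_range.1 hk))
  have hM : ∀ n, MemLp (M n) 2 μ := fun n => memLp_finsetSum _ fun k _ => hY k
  have hsucc : ∀ n ω, M (n + 1) ω = M n ω + Y n ω := fun n ω => Finset.sum_range_succ _ _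
  have hsq : ∀ n, ∫ ω, M n ω ^ 2 ∂μ = ∑ k ∈ Finset.range n, ∫ ω, Y k ω ^ 2 ∂μ := by
    intro n
    induction n with
    | zero => simp [M]
    | succ n ih =>
      simp_rw [hsucc]
      rw [Finset.sum_range_succ, ← ih]
      exact integral_sq_add (ℱ.le n) (hMm n) (hM n) (hY n) (hY0 n)
  have hmart : Martingale M ℱ μ := by
    refine martingale_of_condExp_sub_eq_zero_nat hMm (fun n => (hM n).integrable (by norm_num)) ?_
    intro n
    have : M (n + 1) - M n = Y n := by
      funext ω; simp [hsucc]
    rw [this]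
    exact hY0 n
  refine hmart.submartingale.exists_ae_tendsto_of_bdd (R := (1 + C).toNNReal) fun n => ?_
  have hi : Integrable (fun ω => 1 + M n ω ^ 2) μ := (integrable_const 1).add (hM n).integrable_sq
  calc eLpNorm (M n) 1 μ = ∫⁻ ω, ‖M n ω‖ₑ ∂μ := eLpNorm_one_eq_lintegral_enorm
    _ ≤ ∫⁻ ω, ENNReal.ofReal (1 + M n ω ^ 2) ∂μ := by
        refine lintegral_mono fun ω => ?_
        rw [Real.enorm_eq_ofReal_abs]
        refine ENNReal.ofReal_le_ofReal ?_
        rw [← sq_abs]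
        nlinarith [sq_nonneg (|M n ω| - 1), abs_nonneg (M n ω)]
    _ = ENNReal.ofReal (∫ ω, (1 + M n ω ^ 2) ∂μ) :=
        (ofReal_integral_eq_lintegral_ofReal hi (ae_of_all _ fun ω => by positivity)).symm
    _ ≤ ENNReal.ofReal (1 + C) := by
        refine ENNReal.ofReal_le_ofReal ?_
        rw [integral_add (integrable_const 1) (hM n).integrable_sq, hsq n]
        simpa using hC n

/-- Keeping only the terms up to which the partial sums stay below `K` gives a sum at
most `K`. -/
lemma truncated_sum_le (q : ℕ → ℝ≥0∞) (K : ℝ≥0∞) (n : ℕ) :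
    ∑ k ∈ Finset.range n, (if ∑ j ∈ Finset.range (k + 1), q j ≤ K then q k else 0) ≤ K := by
  induction n with
  | zero => simp
  | succ n ih =>
    by_cases h : ∑ j ∈ Finset.range (n + 1), q j ≤ K
    · refine le_trans (Finset.sum_le_sum fun k _ => ?_) h
      split_ifs <;> simp
    · rw [Finset.sum_range_succ, if_neg h, add_zero]
      exact ih

/-- The convergence on the smaller event `{∑ Q ≤ K}`, for a fixed finite level `K`. -/
lemma ae_tendsto_of_tsum_le
    {Ω : Type*} {mΩ : MeasurableSpace Ω} (μ : Measure Ω) [IsProbabilityMeasure μ]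
    (ℱ : Filtration ℕ mΩ) (Z : ℕ → Ω → ℝ)
    (hZadapted : Adapted ℱ Z) (hZint : ∀ n, Integrable (Z n) μ)
    (Q : ℕ → Ω → ℝ≥0∞)
    (hQmeas : ∀ n, Measurable[ℱ n] (Q n))
    (hQ : ∀ n, ∀ s : Set Ω, MeasurableSet[ℱ n] s →
      ∫⁻ ω in s, Q n ω ∂μ
        = ∫⁻ ω in s, ENNReal.ofReal ((Z (n + 1) ω - Z n ω) ^ 2) ∂μ) (K : ℕ) :
    ∀ᵐ ω ∂μ,
      ((Summable fun n => |(μ[fun ω' => Z (n + 1) ω' - Z n ω' | ℱ n]) ω|) ∧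
          (∑' n, Q n ω) ≤ K) →
        ∃ L : ℝ, Tendsto (fun n => Z n ω) atTop (nhds L) := by
  let D : ℕ → Ω → ℝ := fun n ω => Z (n + 1) ω - Z n ω
  let A : ℕ → Set Ω := fun n => {ω | ∑ j ∈ Finset.range (n + 1), Q j ω ≤ K}
  let X : ℕ → Ω → ℝ := fun n => (A n).indicator (D n)
  let Y : ℕ → Ω → ℝ := fun n => X n - μ[X n | ℱ n]
  have hA : ∀ n, MeasurableSet[ℱ n] (A n) := by
    intro n
    have h : Measurable[ℱ n] fun ω => ∑ j ∈ Finset.range (n + 1), Q j ω :=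
      Finset.measurable_fun_sum _ fun j hj =>
        (hQmeas j).mono (ℱ.mono (Nat.lt_succ_iff.1 (Finset.mem_range.1 hj))) le_rfl
    exact h measurableSet_Iic
  have hDm : ∀ n, StronglyMeasurable[ℱ (n + 1)] (D n) := fun n =>
    ((hZadapted (n + 1)).sub
      ((hZadapted n).mono (ℱ.mono n.le_succ) le_rfl)).stronglyMeasurable
  have hDint : ∀ n, Integrable (D n) μ := fun n => (hZint (n + 1)).sub (hZint n)
  have hXm : ∀ n, StronglyMeasurable[ℱ (n + 1)] (X n) := fun n =>
    (hDm n).indicator (ℱ.mono n.le_succ _ (hA n))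
  have hXsq : ∀ n, ∫⁻ ω, ENNReal.ofReal (X n ω ^ 2) ∂μ = ∫⁻ ω, (A n).indicator (Q n) ω ∂μ := by
    intro n
    rw [lintegral_indicator (ℱ.le n _ (hA n)), hQ n _ (hA n),
      ← lintegral_indicator (ℱ.le n _ (hA n))]
    refine lintegral_congr fun ω => ?_
    by_cases h : ω ∈ A n <;> simp [X, D, h]
  have hsum : ∀ n, ∑ k ∈ Finset.range n, ∫⁻ ω, ENNReal.ofReal (X k ω ^ 2) ∂μ ≤ K := by
    intro n
    simp_rw [hXsq]
    rw [← lintegral_finsetSum _ fun k _ =>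
      ((hQmeas k).mono (ℱ.le k) le_rfl).indicator (ℱ.le k _ (hA k))]
    calc ∫⁻ ω, ∑ k ∈ Finset.range n, (A k).indicator (Q k) ω ∂μ
        ≤ ∫⁻ _, (K : ℝ≥0∞) ∂μ := by
          refine lintegral_mono fun ω => ?_
          refine le_trans (le_of_eq ?_) (truncated_sum_le (fun k => Q k ω) K n)
          exact Finset.sum_congr rfl fun k _ => by simp [Set.indicator, A]
      _ = K := by simp
  have hXae : ∀ n, AEStronglyMeasurable (X n) μ := fun n =>
    ((hXm n).mono (ℱ.le _)).aestronglyMeasurable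
  have hX : ∀ n, MemLp (X n) 2 μ := by
    intro n
    rw [memLp_two_iff_integrable_sq (hXae n)]
    refine ⟨(hXae n).pow 2, ?_⟩
    rw [hasFiniteIntegral_iff_ofReal (ae_of_all _ fun ω => sq_nonneg _)]
    refine lt_of_le_of_lt ?_ (ENNReal.natCast_lt_top K)
    refine le_trans ?_ (hsum (n + 1))
    exact Finset.single_le_sum (f := fun k => ∫⁻ ω, ENNReal.ofReal (X k ω ^ 2) ∂μ)
      (fun _ _ => zero_le) (Finset.self_mem_range_succ n)
  have hXint : ∀ n, Integrable (X n) μ := fun n => (hX n).integrable (by norm_num)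
  have hE : ∀ n, MemLp (μ[X n | ℱ n]) 2 μ := fun n => (hX n).condExp (by norm_num)
  have hY : ∀ n, MemLp (Y n) 2 μ := fun n => (hX n).sub (hE n)
  have hY0 : ∀ n, μ[Y n | ℱ n] =ᵐ[μ] 0 := by
    intro n
    filter_upwards [condExp_sub (hXint n) (integrable_condExp (f := X n) (m := ℱ n)) (ℱ n)]
      with ω h
    rw [h, condExp_of_stronglyMeasurable (ℱ.le n) stronglyMeasurable_condExp integrable_condExp]
    simp
  -- Centering does not increase the second moment: `X = E(X | ℱ) + Y` with orthogonal summands.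
  have hYX : ∀ n, ∫ ω, Y n ω ^ 2 ∂μ ≤ ∫ ω, X n ω ^ 2 ∂μ := by
    intro n
    have h := integral_sq_add (ℱ.le n) stronglyMeasurable_condExp (hE n) (hY n) (hY0 n)
    have e : ∀ ω, (μ[X n | ℱ n]) ω + Y n ω = X n ω := fun ω => by simp [Y]
    simp_rw [e] at h
    rw [h]
    exact le_add_of_nonneg_left (integral_nonneg fun ω => sq_nonneg _)
  have hC : ∀ n, ∑ k ∈ Finset.range n, ∫ ω, Y k ω ^ 2 ∂μ ≤ K := by
    intro n
    refine (Finset.sum_le_sum fun k _ => hYX k).trans ?_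
    have h := hsum n
    simp_rw [← fun k => ofReal_integral_eq_lintegral_ofReal (hX k).integrable_sq
      (ae_of_all _ fun ω => sq_nonneg (X k ω))] at h
    rw [← ENNReal.ofReal_sum_of_nonneg fun k _ => integral_nonneg fun ω => sq_nonneg _,
      ← ENNReal.ofReal_natCast, ENNReal.ofReal_le_ofReal_iff (Nat.cast_nonneg K)] at h
    exact h
  have hconv := ae_tendsto_sum_of_centered ℱ Y
    (fun n => (hXm n).sub (stronglyMeasurable_condExp.mono (ℱ.mono n.le_succ))) hY hY0 K hC
  have hcond : ∀ᵐ ω ∂μ, ∀ n, (μ[X n | ℱ n]) ω = (A n).indicator (μ[D n | ℱ n]) ω :=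
    ae_all_iff.2 fun n => condExp_indicator (hDint n) (hA n)
  filter_upwards [hconv, hcond] with ω ⟨c, hc⟩ hω ⟨hΔ, hK⟩
  have hmem : ∀ n, ω ∈ A n := fun n => (ENNReal.sum_le_tsum _).trans hK
  have hstep : ∀ n, Y n ω = (Z (n + 1) ω - Z n ω) - (μ[D n | ℱ n]) ω := by
    intro n
    simp only [Y, Pi.sub_apply, hω n, X, Set.indicator_of_mem (hmem n), D]
  have hΔ' := (Summable.of_abs hΔ).hasSum.tendsto_sum_nat
  refine ⟨_, Tendsto.congr (fun n => ?_) ((hc.add hΔ').const_add (Z 0 ω))⟩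
  rw [← Finset.sum_add_distrib]
  have : ∀ k, Y k ω + (μ[fun ω' => Z (k + 1) ω' - Z k ω' | ℱ k]) ω = Z (k + 1) ω - Z k ω :=
    fun k => by rw [hstep k]; exact sub_add_cancel _ _
  simp_rw [this]
  rw [Finset.sum_range_sub (fun k => Z k ω)]
  ring

/-- **Lemma (semiconvergence)**: Let `(Zₙ)` be adapted and integrable, let
`Δₙ = E(Z_{n+1} − Zₙ | ℱₙ)`, and let `Qₙ` be (a version of) the conditional expectation
`E((Z_{n+1} − Zₙ)² | ℱₙ)`, taken with values in `[0, ∞]` (characterized by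
`ℱ n`-measurability and the defining integral identity on `ℱ n`-measurable sets).
Then `Zₙ` converges almost surely to a finite limit on the event
`{Σₙ |Δₙ| < ∞ and Σₙ Qₙ < ∞}`. -/
theorem converges_on_summable_increments
    {Ω : Type*} {mΩ : MeasurableSpace Ω} (μ : Measure Ω) [IsProbabilityMeasure μ]
    (ℱ : Filtration ℕ mΩ) (Z : ℕ → Ω → ℝ)
    (hZadapted : Adapted ℱ Z) (hZint : ∀ n, Integrable (Z n) μ)
    (Q : ℕ → Ω → ℝ≥0∞)
    (hQmeas : ∀ n, Measurable[ℱ n] (Q n))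
    (hQ : ∀ n, ∀ s : Set Ω, MeasurableSet[ℱ n] s →
      ∫⁻ ω in s, Q n ω ∂μ
        = ∫⁻ ω in s, ENNReal.ofReal ((Z (n + 1) ω - Z n ω) ^ 2) ∂μ) :
    ∀ᵐ ω ∂μ,
      ((Summable fun n => |(μ[fun ω' => Z (n + 1) ω' - Z n ω' | ℱ n]) ω|) ∧
          (∑' n, Q n ω) < ⊤) →
        ∃ L : ℝ, Tendsto (fun n => Z n ω) atTop (nhds L) := by
  filter_upwards [ae_all_iff.2 (ae_tendsto_of_tsum_le μ ℱ Z hZadapted hZint Q hQmeas hQ)]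
    with ω h ⟨hΔ, hlt⟩
  obtain ⟨K, hK⟩ := ENNReal.exists_nat_gt hlt.ne
  exact h K ⟨hΔ, hK.le⟩
end

section
/- Let (X_n, Y_n) be a generalized urn process with parameters (1, 0, c, 1), c > 0. Then for every γ < 1, almost surely Y_n ≥ n^γ for all sufficiently large n; that is, Y_n is almost surely eventually greater than any power of n less than 1. -/
/-!
The key quantity is `X / (Y - 1)`: as long as `Y > 1`, its conditional expected increment in one
step is exactly `c / (X + Y)`. Since `X + Y` grows at least linearly, `Xₙ / (Yₙ - 1)` divided by
`(n + 1) ^ ε` is a nonnegative supermartingale up to the summable drift `c / (n + 1) ^ (1 + ε)`,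
so it converges almost surely and in particular is bounded. Hence
`n ≤ Xₙ + Yₙ ≤ C (n + 1) ^ ε Yₙ`, which gives `Yₙ ≥ n ^ (1 - ε) / C`
(`IsUrn.ae_exists_rpow_le`).

For this one needs `Y ≥ 2` at the start and a bounded starting value of `X` (for integrability).
Neither is assumed, but an urn process restarted at a time `m` is again an urn process
(`IsUrn.shift`), so it is enough that almost surely `Yₘ ≥ 2` for some `m`. This is Lévy's
conditional Borel-Cantelli lemma (`IsUrn.ae_exists_two_le`): the conditional probability
`Yₙ / (Xₙ + Yₙ)` that `Y` increases is at least of order `1 / n`, so its sum diverges.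
-/

open MeasureTheory Filter Set

namespace IsUrn

variable {Ω : Type*} {mΩ : MeasurableSpace Ω} {μ : Measure Ω} {ℱ : Filtration ℕ mΩ} {c : ℝ}
  {X Y : ℕ → Ω → ℝ}

/-! ### Restarting the urn, and pathwise bounds -/

/-- The filtration `ℱ` seen from time `m` on. -/
def shiftFiltration (ℱ : Filtration ℕ mΩ) (m : ℕ) : Filtration ℕ mΩ where
  seq n := ℱ (n + m)
  mono' _ _ h := ℱ.mono (Nat.add_le_add_right h m)
  le' n := ℱ.le (n + m)

lemma shift_s8 {a b d : ℝ} (h : IsUrn μ ℱ a b c d X Y) (m : ℕ) :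
    IsUrn μ (shiftFiltration ℱ m) a b c d (fun n => X (n + m)) (fun n => Y (n + m)) := by
  obtain ⟨hX, hY, hXpos, hYpos, hstep, h1, h2⟩ := h
  refine ⟨fun n => hX (n + m), fun n => hY (n + m), fun n => hXpos (n + m),
    fun n => hYpos (n + m), fun n ω => ?_, fun n => ?_, fun n => ?_⟩
  · have := hstep (n + m) ω
    rwa [Nat.add_right_comm] at this
  · have := h1 (n + m)
    rwa [Nat.add_right_comm] at this
  · have := h2 (n + m)
    rwa [Nat.add_right_comm] at this

lemma Y_mono (h : IsUrn μ ℱ 1 0 c 1 X Y) (ω : Ω) : Monotone fun n => Y n ω := by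
  refine monotone_nat_of_le_succ fun n => ?_
  rcases h.2.2.2.2.1 n ω with ⟨_, h'⟩ | ⟨_, h'⟩ <;> rw [h'] <;> linarith

lemma X_le (h : IsUrn μ ℱ 1 0 c 1 X Y) (hc : 0 < c) (n : ℕ) (ω : Ω) :
    X n ω ≤ X 0 ω + (1 + c) * n := by
  induction n with
  | zero => simp
  | succ n ih =>
    push_cast
    rcases h.2.2.2.2.1 n ω with ⟨h', _⟩ | ⟨h', _⟩ <;> rw [h'] <;> linarith

lemma add_le_sum (h : IsUrn μ ℱ 1 0 c 1 X Y) (hc : 0 < c) (n : ℕ) (ω : Ω) :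
    Y 0 ω + n ≤ X n ω + Y n ω := by
  induction n with
  | zero => have := h.2.2.1 0 ω; simp; linarith
  | succ n ih =>
    push_cast
    rcases h.2.2.2.2.1 n ω with ⟨h', h''⟩ | ⟨h', h''⟩ <;> rw [h', h''] <;> linarith

lemma sum_le (h : IsUrn μ ℱ 1 0 c 1 X Y) (hc : 0 < c) (n : ℕ) (ω : Ω) :
    X n ω + Y n ω ≤ X 0 ω + Y 0 ω + (1 + c) * n := by
  induction n with
  | zero => simp
  | succ n ih =>
    push_cast
    rcases h.2.2.2.2.1 n ω with ⟨h', h''⟩ | ⟨h', h''⟩ <;> rw [h', h''] <;> linarith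

/-! ### The second colour is drawn infinitely often -/

/-- The conditional probabilities `Yₙ / (Xₙ + Yₙ) ≥ Y₀ / (X₀ + Y₀ + (1 + c) n)` of drawing the
second colour have a divergent sum, so it is drawn infinitely often; two draws suffice to bring
`Y` above `2`. -/
lemma ae_exists_two_le [IsProbabilityMeasure μ] (h : IsUrn μ ℱ 1 0 c 1 X Y) (hc : 0 < c) :
    ∀ᵐ ω ∂μ, ∃ m, 2 ≤ Y m ω := by
  classical
  -- `s (n + 1)` is the event that the second colour is drawn at step `n`.
  let s : ℕ → Set Ω := fun n => Nat.rec ∅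
    (fun k _ => {ω | X (k + 1) ω = X k ω + c ∧ Y (k + 1) ω = Y k ω + 1}) n
  have hs : ∀ n, MeasurableSet[ℱ n] (s n) := by
    intro n
    cases n with
    | zero => exact @MeasurableSet.empty _ (ℱ 0)
    | succ k =>
      have hX1 := h.1 (k + 1)
      have hY1 := h.2.1 (k + 1)
      have hX0 := (h.1 k).mono (ℱ.mono k.le_succ) le_rfl
      have hY0 := (h.2.1 k).mono (ℱ.mono k.le_succ) le_rfl
      exact (measurableSet_eq_fun hX1 (hX0.add_const c)).inter
        (measurableSet_eq_fun hY1 (hY0.add_const 1))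
  have hcond : ∀ᵐ ω ∂μ, ∀ k, (μ[(s (k + 1)).indicator (1 : Ω → ℝ) | ℱ k]) ω
      = Y k ω / (X k ω + Y k ω) := by
    rw [ae_all_iff]
    intro k
    have h2 := h.2.2.2.2.2.2 k
    have hind : (s (k + 1)).indicator (1 : Ω → ℝ) = fun ω =>
        if X (k + 1) ω = X k ω + c ∧ Y (k + 1) ω = Y k ω + 1 then (1 : ℝ) else 0 := by
      funext ω
      simp [s, indicator_apply]
    rw [hind]
    exact h2
  filter_upwards [ae_mem_limsup_atTop_iff μ hs, hcond] with ω hω hk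
  have hYpos := h.2.2.2.1
  have hXpos := h.2.2.1
  have hmono := h.Y_mono ω
  have hlim : ω ∈ limsup s atTop := by
    rw [hω]
    simp only [hk]
    set D := X 0 ω + Y 0 ω + (1 + c) with hD
    have hX0 := hXpos 0 ω
    have hY0 := hYpos 0 ω
    have hDpos : 0 < D := by positivity
    refine tendsto_atTop_mono (fun n => ?_)
      (Real.tendsto_sum_range_one_div_nat_succ_atTop.const_mul_atTop
        (show 0 < Y 0 ω / D by positivity))
    rw [Finset.mul_sum]
    refine Finset.sum_le_sum fun k _ => ?_
    have hXk := hXpos k ω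
    have hYk := hYpos k ω
    rw [div_mul_div_comm, mul_one]
    refine div_le_div₀ hYk.le (hmono (Nat.zero_le k)) (by positivity) ?_
    have := h.sum_le hc k ω
    have hk0 : (0 : ℝ) ≤ k := k.cast_nonneg
    have : 0 ≤ (X 0 ω + Y 0 ω) * k := by positivity
    rw [hD]
    nlinarith
  rw [mem_limsup_iff_frequently_mem, frequently_atTop] at hlim
  have hjump : ∀ N, ∃ n ≥ N, Y (n + 1) ω = Y n ω + 1 := by
    intro N
    obtain ⟨n, hn, hmem⟩ := hlim (N + 1)
    obtain ⟨k, rfl⟩ : ∃ k, n = k + 1 := ⟨n - 1, by omega⟩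
    exact ⟨k, by omega, hmem.2⟩
  obtain ⟨n₁, -, h₁⟩ := hjump 0
  obtain ⟨n₂, hn, h₂⟩ := hjump (n₁ + 1)
  have := hmono hn
  have := hYpos n₁ ω
  simp only at *
  exact ⟨n₂ + 1, by linarith⟩

/-! ### The drift of `X / (Y - 1)` -/

/-- The ratio `Xₙ / (Yₙ - 1)`, restricted to the event that the process starts with `Y₀ ≥ 2`
and `X₀ ≤ K`, where it is well defined and bounded for each `n`. -/
noncomputable def ratio (X Y : ℕ → Ω → ℝ) (K : ℝ) (n : ℕ) : Ω → ℝ :=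
  {ω | 2 ≤ Y 0 ω ∧ X 0 ω ≤ K}.indicator fun ω => X n ω / (Y n ω - 1)

lemma measurableSet_start (h : IsUrn μ ℱ 1 0 c 1 X Y) (K : ℝ) (n : ℕ) :
    MeasurableSet[ℱ n] {ω | 2 ≤ Y 0 ω ∧ X 0 ω ≤ K} := by
  have hX0 := (h.1 0).mono (ℱ.mono n.zero_le) le_rfl
  have hY0 := (h.2.1 0).mono (ℱ.mono n.zero_le) le_rfl
  exact (measurableSet_le measurable_const hY0).inter (measurableSet_le hX0 measurable_const)

lemma ratio_nonneg (h : IsUrn μ ℱ 1 0 c 1 X Y) (K : ℝ) (n : ℕ) (ω : Ω) :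
    0 ≤ ratio X Y K n ω := by
  refine indicator_nonneg (fun ω hω => ?_) ω
  have := h.Y_mono ω n.zero_le
  have := hω.1
  simp only at *
  exact div_nonneg (h.2.2.1 n ω).le (by linarith)

lemma ratio_measurable (h : IsUrn μ ℱ 1 0 c 1 X Y) (K : ℝ) (n : ℕ) :
    Measurable[ℱ n] (ratio X Y K n) :=
  ((h.1 n).div ((h.2.1 n).sub_const 1)).indicator (h.measurableSet_start K n)

lemma ratio_integrable [IsProbabilityMeasure μ] (h : IsUrn μ ℱ 1 0 c 1 X Y) (hc : 0 < c)
    (K : ℝ) (n : ℕ) : Integrable (ratio X Y K n) μ := by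
  refine Integrable.of_bound
    ((h.ratio_measurable K n).mono (ℱ.le n) le_rfl).aestronglyMeasurable
    (|K| + (1 + c) * n) (ae_of_all _ fun ω => ?_)
  rw [Real.norm_of_nonneg (h.ratio_nonneg K n ω), ratio]
  refine indicator_apply_le' (fun hω => ?_) fun _ => by positivity
  have hY : Y 0 ω ≤ Y n ω := h.Y_mono ω n.zero_le
  have h2 := hω.1
  have hK := hω.2
  calc X n ω / (Y n ω - 1) ≤ X n ω := div_le_self (h.2.2.1 n ω).le (by linarith)
    _ ≤ _ := by linarith [h.X_le hc n ω, le_abs_self K]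

/-- On the event `Y₀ ≥ 2`, `X₀ ≤ K` the one-step drift of `X / (Y - 1)` is exactly `c / (X + Y)`,
and `Xₙ + Yₙ ≥ n + 1`. -/
lemma condExp_ratio_le [IsProbabilityMeasure μ] (h : IsUrn μ ℱ 1 0 c 1 X Y) (hc : 0 < c)
    (K : ℝ) (n : ℕ) :
    ∀ᵐ ω ∂μ, (μ[ratio X Y K (n + 1) | ℱ n]) ω ≤ ratio X Y K n ω + c / (n + 1) := by
  classical
  set A : Set Ω := {ω | 2 ≤ Y 0 ω ∧ X 0 ω ≤ K} with hA
  -- On `A`, the ratio at time `n + 1` is `G + H * J`, where `J` indicates that the second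
  -- colour is drawn and `G`, `H` are known at time `n`.
  let G : Ω → ℝ := A.indicator fun ω => (X n ω + 1) / (Y n ω - 1)
  let H : Ω → ℝ := A.indicator fun ω => (X n ω + c) / Y n ω - (X n ω + 1) / (Y n ω - 1)
  let J : Ω → ℝ := fun ω =>
    if X (n + 1) ω = X n ω + c ∧ Y (n + 1) ω = Y n ω + 1 then (1 : ℝ) else 0
  have hAm : MeasurableSet[ℱ n] A := h.measurableSet_start K n
  have hXm := h.1 n
  have hYm := h.2.1 n
  have hGm : Measurable[ℱ n] G :=
    ((hXm.add_const 1).div (hYm.sub_const 1)).indicator hAm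
  have hHm : Measurable[ℱ n] H :=
    (((hXm.add_const c).div hYm).sub ((hXm.add_const 1).div (hYm.sub_const 1))).indicator hAm
  have hfacts : ∀ ω ∈ A, 2 ≤ Y n ω ∧ 0 < X n ω ∧ X n ω ≤ |K| + (1 + c) * n := by
    intro ω hω
    have hY : Y 0 ω ≤ Y n ω := h.Y_mono ω n.zero_le
    have h2 := hω.1
    have hK := hω.2
    exact ⟨by linarith, h.2.2.1 n ω, by linarith [h.X_le hc n ω, le_abs_self K]⟩
  set B : ℝ := |K| + (1 + c) * n with hB
  have hB0 : 0 ≤ B := by positivity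
  have hq1 : ∀ ω ∈ A, 0 ≤ (X n ω + 1) / (Y n ω - 1) ∧ (X n ω + 1) / (Y n ω - 1) ≤ B + 1 := by
    intro ω hω
    obtain ⟨hY, hX, hXB⟩ := hfacts ω hω
    exact ⟨div_nonneg (by linarith) (by linarith),
      (div_le_self (by linarith) (by linarith)).trans (by linarith)⟩
  have hq2 : ∀ ω ∈ A, 0 ≤ (X n ω + c) / Y n ω ∧ (X n ω + c) / Y n ω ≤ B + c := by
    intro ω hω
    obtain ⟨hY, hX, hXB⟩ := hfacts ω hω
    exact ⟨div_nonneg (by linarith) (by linarith),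
      (div_le_self (by linarith) (by linarith)).trans (by linarith)⟩
  have hGint : Integrable G μ := by
    refine Integrable.of_bound (hGm.mono (ℱ.le n) le_rfl).aestronglyMeasurable (B + 1)
      (ae_of_all _ fun ω => ?_)
    by_cases hω : ω ∈ A
    · simp only [G, indicator_of_mem hω, Real.norm_eq_abs]
      rw [abs_of_nonneg (hq1 ω hω).1]
      exact (hq1 ω hω).2
    · simp only [G, indicator_of_notMem hω, norm_zero]
      positivity
  have hHbd : ∀ ω, ‖H ω‖ ≤ (B + 1) + (B + c) := by
    intro ω
    by_cases hω : ω ∈ A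
    · simp only [H, indicator_of_mem hω, Real.norm_eq_abs]
      rw [abs_le]
      have h1 := hq1 ω hω
      have h2 := hq2 ω hω
      constructor <;> linarith [h1.1, h1.2, h2.1, h2.2]
    · simp only [H, indicator_of_notMem hω, norm_zero]
      positivity
  have hJm : Measurable J := by
    have hX1 := (h.1 (n + 1)).mono (ℱ.le _) le_rfl
    have hY1 := (h.2.1 (n + 1)).mono (ℱ.le _) le_rfl
    have hX0 := (h.1 n).mono (ℱ.le _) le_rfl
    have hY0 := (h.2.1 n).mono (ℱ.le _) le_rfl
    exact Measurable.ite ((measurableSet_eq_fun hX1 (hX0.add_const c)).inter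
      (measurableSet_eq_fun hY1 (hY0.add_const 1))) measurable_const measurable_const
  have hJint : Integrable J μ := by
    refine Integrable.of_bound hJm.aestronglyMeasurable 1 (ae_of_all _ fun ω => ?_)
    simp only [J]
    split_ifs <;> simp
  have hHJ : Integrable (H * J) μ :=
    hJint.bdd_mul (hHm.mono (ℱ.le n) le_rfl).aestronglyMeasurable (ae_of_all _ hHbd)
  have hdec : ratio X Y K (n + 1) = G + H * J := by
    funext ω
    by_cases hω : ω ∈ A
    · simp only [ratio, G, H, J, Pi.add_apply, Pi.mul_apply, ← hA, indicator_of_mem hω]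
      rcases h.2.2.2.2.1 n ω with ⟨hx, hy⟩ | ⟨hx, hy⟩
      · have : ¬ (X (n + 1) ω = X n ω + c ∧ Y (n + 1) ω = Y n ω + 1) := by
          rintro ⟨-, h'⟩
          linarith
        rw [if_neg this, hx, hy]
        simp
      · rw [if_pos ⟨hx, hy⟩, hx, hy]
        simp
    · simp only [ratio, G, H, Pi.add_apply, Pi.mul_apply, ← hA, indicator_of_notMem hω]
      simp
  have hpull := condExp_stronglyMeasurable_mul_of_bound (ℱ.le n) hHm.stronglyMeasurable hJint
    _ (ae_of_all μ hHbd)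
  have hJc : μ[J | ℱ n] =ᵐ[μ] fun ω => Y n ω / (X n ω + Y n ω) := h.2.2.2.2.2.2 n
  have hG := condExp_of_stronglyMeasurable (ℱ.le n) hGm.stronglyMeasurable hGint
  rw [hdec]
  filter_upwards [condExp_add hGint hHJ (ℱ n), hpull, hJc] with ω e1 e2 e3
  rw [e1, Pi.add_apply, hG, e2, Pi.mul_apply, e3]
  by_cases hω : ω ∈ A
  · obtain ⟨hY, hX, -⟩ := hfacts ω hω
    have hY0 : Y n ω ≠ 0 := by linarith
    have hY1 : Y n ω - 1 ≠ 0 := by linarith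
    have hS : X n ω + Y n ω ≠ 0 := by linarith
    simp only [G, H, ratio, ← hA, indicator_of_mem hω]
    have key : (X n ω + 1) / (Y n ω - 1) + ((X n ω + c) / Y n ω - (X n ω + 1) / (Y n ω - 1))
        * (Y n ω / (X n ω + Y n ω)) = X n ω / (Y n ω - 1) + c / (X n ω + Y n ω) := by
      field_simp
      ring
    rw [key]
    have hlow := h.add_le_sum hc n ω
    have h2 := hω.1
    have : c / (X n ω + Y n ω) ≤ c / (n + 1) :=
      div_le_div_of_nonneg_left hc.le (by positivity) (by linarith)
    linarith
  · simp only [G, H, ratio, ← hA, indicator_of_notMem hω]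
    have : 0 ≤ c / ((n : ℝ) + 1) := by positivity
    simpa using this

/-! ### Convergence of the rescaled ratio and growth of `Y` -/

/-- Minus the ratio rescaled by `(n + 1) ^ ε`, plus the accumulated bounds
`c / (k + 1) ^ (1 + ε)` on its drift. -/
noncomputable def compensated (X Y : ℕ → Ω → ℝ) (c K ε : ℝ) (n : ℕ) (ω : Ω) : ℝ :=
  ∑ k ∈ Finset.range n, c / ((k : ℝ) + 1) ^ (1 + ε) - ratio X Y K n ω / ((n : ℝ) + 1) ^ ε

lemma compensated_submartingale [IsProbabilityMeasure μ] (h : IsUrn μ ℱ 1 0 c 1 X Y) (hc : 0 < c)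
    (K : ℝ) {ε : ℝ} (hε : 0 < ε) : Submartingale (compensated X Y c K ε) ℱ μ := by
  have hint : ∀ n, Integrable (compensated X Y c K ε n) μ := fun n =>
    (integrable_const _).sub ((h.ratio_integrable hc K n).div_const _)
  refine submartingale_nat (fun n => ?_) hint fun n => ?_
  · exact (measurable_const.sub ((h.ratio_measurable K n).div_const _)).stronglyMeasurable
  set a : ℝ := ∑ k ∈ Finset.range (n + 1), c / ((k : ℝ) + 1) ^ (1 + ε) with ha
  set w : ℝ := (((n + 1 : ℕ) : ℝ) + 1) ^ ε with hw
  have hdec : compensated X Y c K ε (n + 1) = (fun _ => a) - w⁻¹ • ratio X Y K (n + 1) := by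
    funext ω
    simp only [compensated, Pi.sub_apply, Pi.smul_apply, smul_eq_mul, ← ha, ← hw]
    ring
  rw [hdec]
  filter_upwards [condExp_sub (integrable_const a)
      ((h.ratio_integrable hc K (n + 1)).smul w⁻¹) (ℱ n),
    condExp_smul (μ := μ) w⁻¹ (ratio X Y K (n + 1)) (ℱ n), h.condExp_ratio_le hc K n]
    with ω e1 e2 e3
  rw [e1, Pi.sub_apply, e2, condExp_const (ℱ.le n), Pi.smul_apply, smul_eq_mul, compensated, ha,
    Finset.sum_range_succ]
  have hn : (0 : ℝ) < (n : ℝ) + 1 := by positivity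
  have hv : 0 < ((n : ℝ) + 1) ^ ε := Real.rpow_pos_of_pos hn _
  have hvw : ((n : ℝ) + 1) ^ ε ≤ w :=
    Real.rpow_le_rpow hn.le (by push_cast; linarith) hε.le
  have hr := h.ratio_nonneg K n ω
  have : w⁻¹ * (μ[ratio X Y K (n + 1) | ℱ n]) ω
      ≤ ratio X Y K n ω / ((n : ℝ) + 1) ^ ε + c / ((n : ℝ) + 1) ^ (1 + ε) := by
    calc w⁻¹ * (μ[ratio X Y K (n + 1) | ℱ n]) ω
        ≤ w⁻¹ * (ratio X Y K n ω + c / (n + 1)) :=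
          mul_le_mul_of_nonneg_left e3 (inv_nonneg.2 (hv.le.trans hvw))
      _ ≤ (((n : ℝ) + 1) ^ ε)⁻¹ * (ratio X Y K n ω + c / (n + 1)) :=
          mul_le_mul_of_nonneg_right (inv_anti₀ hv hvw) (by positivity)
      _ = _ := by
          rw [Real.rpow_add hn, Real.rpow_one]
          field_simp
  linarith

/-- Boundedness of `Xₙ / (Yₙ - 1) / (n + 1) ^ ε`, from submartingale convergence, combined with
`Xₙ + Yₙ ≥ n + 1`. -/
lemma ae_exists_rpow_le_of_start [IsProbabilityMeasure μ] (h : IsUrn μ ℱ 1 0 c 1 X Y)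
    (hc : 0 < c) (K : ℝ) {ε : ℝ} (hε : 0 < ε) :
    ∀ᵐ ω ∂μ, 2 ≤ Y 0 ω ∧ X 0 ω ≤ K → ∃ C : ℝ, ∀ n : ℕ,
      ((n : ℝ) + 1) ^ (1 - ε) ≤ C * Y n ω := by
  have hsub := h.compensated_submartingale hc K hε
  have hsum : Summable fun k : ℕ => c / ((k : ℝ) + 1) ^ (1 + ε) := by
    have := (Real.summable_one_div_nat_rpow (p := 1 + ε)).2 (by linarith)
    have := ((summable_nat_add_iff 1).2 this).mul_left c
    refine this.congr fun k => ?_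
    push_cast
    ring
  set B : ℝ := ∑' k : ℕ, c / ((k : ℝ) + 1) ^ (1 + ε) with hB
  have hpart : ∀ n, ∑ k ∈ Finset.range n, c / ((k : ℝ) + 1) ^ (1 + ε) ≤ B := fun n =>
    hsum.sum_le_tsum _ fun k _ => by positivity
  have hB0 : 0 ≤ B := by simpa using hpart 0
  have hle : ∀ n ω, compensated X Y c K ε n ω ≤ B := by
    intro n ω
    have : 0 ≤ ratio X Y K n ω / ((n : ℝ) + 1) ^ ε :=
      div_nonneg (h.ratio_nonneg K n ω) (by positivity)
    have := hpart n
    simp only [compensated]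
    linarith
  -- The submartingale `U = compensated` has `U ≤ B`, so `|U| ≤ 2 B - U`, whose mean is
  -- nonincreasing.
  have hL1 : ∀ n, eLpNorm (compensated X Y c K ε n) 1 μ
      ≤ (Real.toNNReal (2 * B - ∫ ω, compensated X Y c K ε 0 ω ∂μ) : ENNReal) := by
    intro n
    have hi := hsub.integrable n
    rw [eLpNorm_one_eq_lintegral_enorm, ← ofReal_integral_norm_eq_lintegral_enorm hi]
    refine ENNReal.ofReal_le_ofReal ?_
    have hmono : ∫ ω, compensated X Y c K ε 0 ω ∂μ ≤ ∫ ω, compensated X Y c K ε n ω ∂μ := by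
      simpa using hsub.setIntegral_le n.zero_le MeasurableSet.univ
    calc ∫ ω, ‖compensated X Y c K ε n ω‖ ∂μ ≤ ∫ ω, (2 * B - compensated X Y c K ε n ω) ∂μ := by
          refine integral_mono hi.norm ((integrable_const _).sub hi) fun ω => ?_
          have := hle n ω
          simp only [Real.norm_eq_abs]
          rw [abs_le]
          constructor <;> linarith
      _ = 2 * B - ∫ ω, compensated X Y c K ε n ω ∂μ := by
          rw [integral_sub (integrable_const _) hi]
          simp
      _ ≤ _ := by linarith
  filter_upwards [hsub.ae_tendsto_limitProcess hL1] with ω hω hstart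
  obtain ⟨L, hL⟩ := hω.bddBelow_range
  have hL' : ∀ n, L ≤ compensated X Y c K ε n ω := fun n => hL ⟨n, rfl⟩
  refine ⟨|B - L| + 1, fun n => ?_⟩
  have hn : (0 : ℝ) < (n : ℝ) + 1 := by positivity
  have hv : 0 < ((n : ℝ) + 1) ^ ε := Real.rpow_pos_of_pos hn _
  have hv1 : 1 ≤ ((n : ℝ) + 1) ^ ε := Real.one_le_rpow (by linarith [n.cast_nonneg (α := ℝ)]) hε.le
  have hY : Y 0 ω ≤ Y n ω := h.Y_mono ω n.zero_le
  have h2 := hstart.1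
  have hlow := h.add_le_sum hc n ω
  have hq : X n ω / (Y n ω - 1) / ((n : ℝ) + 1) ^ ε ≤ |B - L| := by
    have h1 := hL' n
    have h3 := hpart n
    have hr : ratio X Y K n ω = X n ω / (Y n ω - 1) :=
      indicator_of_mem (s := {ω | 2 ≤ Y 0 ω ∧ X 0 ω ≤ K}) hstart _
    simp only [compensated, hr] at h1
    exact le_trans (by linarith) (le_abs_self (B - L))
  rw [div_le_iff₀ hv, div_le_iff₀ (by linarith)] at hq
  rw [Real.rpow_sub hn, Real.rpow_one, div_le_iff₀ hv]
  have hDv : 0 ≤ |B - L| * ((n : ℝ) + 1) ^ ε := by positivity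
  have hYv : Y n ω ≤ Y n ω * ((n : ℝ) + 1) ^ ε :=
    le_mul_of_one_le_right (by linarith) hv1
  nlinarith

lemma ae_exists_rpow_le [IsProbabilityMeasure μ] (h : IsUrn μ ℱ 1 0 c 1 X Y)
    (hc : 0 < c) {ε : ℝ} (hε : 0 < ε) :
    ∀ᵐ ω ∂μ, ∃ (m : ℕ) (C : ℝ), ∀ n : ℕ, ((n : ℝ) + 1) ^ (1 - ε) ≤ C * Y (n + m) ω := by
  have hall : ∀ᵐ ω ∂μ, ∀ m K : ℕ, 2 ≤ Y (0 + m) ω ∧ X (0 + m) ω ≤ K → ∃ C : ℝ, ∀ n : ℕ,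
      ((n : ℝ) + 1) ^ (1 - ε) ≤ C * Y (n + m) ω := by
    rw [ae_all_iff]
    intro m
    rw [ae_all_iff]
    intro K
    exact (h.shift_s8 m).ae_exists_rpow_le_of_start hc K hε
  filter_upwards [hall, h.ae_exists_two_le hc] with ω hω ⟨m, hm⟩
  obtain ⟨K, hK⟩ := exists_nat_ge (X (0 + m) ω)
  exact ⟨m, hω m K ⟨by simpa using hm, hK⟩⟩

end IsUrn

/-- **Lemma (preliminary growth)**: For the urn with parameters `(1, 0, c, 1)`, `c > 0`,
the second coordinate `Yₙ` is almost surely eventually greater than any power of `n`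
less than 1: for every `γ < 1`, almost surely `Yₙ ≥ n^γ` for all sufficiently large `n`. -/
theorem urn_Y_grows_polynomially
    {Ω : Type*} {mΩ : MeasurableSpace Ω} (μ : Measure Ω) [IsProbabilityMeasure μ]
    (ℱ : Filtration ℕ mΩ) (c : ℝ) (hc : 0 < c)
    (X Y : ℕ → Ω → ℝ) (hXY : IsUrn μ ℱ 1 0 c 1 X Y)
    (γ : ℝ) (hγ : γ < 1) :
    ∀ᵐ ω ∂μ, ∀ᶠ n : ℕ in atTop, (n : ℝ) ^ γ ≤ Y n ω := by
  -- Replacing `γ` by `max γ 0` only strengthens the bound for `n ≥ 1`.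
  set g : ℝ := max γ 0 with hg
  have hg0 : 0 ≤ g := le_max_right _ _
  have hg1 : g < 1 := max_lt hγ one_pos
  have hε : 0 < (1 - g) / 2 := by linarith
  filter_upwards [hXY.ae_exists_rpow_le hc hε] with ω ⟨m, C, hC⟩
  rw [← map_add_atTop_eq_nat m, eventually_map]
  have hlim : Tendsto (fun n : ℕ => ((n : ℝ) + 1) ^ ((1 - g) / 2)) atTop atTop :=
    (tendsto_rpow_atTop hε).comp (tendsto_atTop_add_const_right _ 1 tendsto_natCast_atTop_atTop)
  filter_upwards [hlim.eventually_ge_atTop (|C| * ((m : ℝ) + 1) ^ g), eventually_ge_atTop 1]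
    with n hn hn1
  have hYpos := hXY.2.2.2.1 (n + m) ω
  have hn1' : (1 : ℝ) ≤ n := by exact_mod_cast hn1
  have hm0 : (0 : ℝ) ≤ m := m.cast_nonneg
  have hC1 := hC n
  have hn0 : (0 : ℝ) < (n : ℝ) + 1 := by positivity
  have hCpos : 0 < |C| := by
    rw [abs_pos]
    rintro rfl
    rw [zero_mul] at hC1
    exact absurd hC1 (not_le.2 (Real.rpow_pos_of_pos hn0 _))
  have hexp : 1 - (1 - g) / 2 = (1 - g) / 2 + g := by ring
  rw [hexp, Real.rpow_add hn0] at hC1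
  have h1 : ((n + m : ℕ) : ℝ) ^ γ ≤ ((m : ℝ) + 1) ^ g * ((n : ℝ) + 1) ^ g := by
    rw [← Real.mul_rpow (by positivity) hn0.le]
    push_cast
    calc ((n : ℝ) + m) ^ γ ≤ ((n : ℝ) + m) ^ g :=
          Real.rpow_le_rpow_of_exponent_le (by linarith) (le_max_left _ _)
      _ ≤ _ := Real.rpow_le_rpow (by positivity) (by nlinarith) hg0
  have hp : 0 < ((n : ℝ) + 1) ^ g := Real.rpow_pos_of_pos hn0 _
  have h2 : |C| * (((m : ℝ) + 1) ^ g * ((n : ℝ) + 1) ^ g) ≤ |C| * Y (n + m) ω := by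
    calc |C| * (((m : ℝ) + 1) ^ g * ((n : ℝ) + 1) ^ g)
        = |C| * ((m : ℝ) + 1) ^ g * ((n : ℝ) + 1) ^ g := by ring
      _ ≤ ((n : ℝ) + 1) ^ ((1 - g) / 2) * ((n : ℝ) + 1) ^ g :=
          mul_le_mul_of_nonneg_right hn hp.le
      _ ≤ C * Y (n + m) ω := hC1
      _ ≤ |C| * Y (n + m) ω := mul_le_mul_of_nonneg_right (le_abs_self C) hYpos.le
  exact h1.trans (le_of_mul_le_mul_left h2 hCpos)
end

section
/- Let (X_n, Y_n) be a generalized urn process with parameters (a, 0, 0, 1) where a > 1. Then log Y_n / log X_n → 1/a almost surely as n → ∞ (equivalently, log X_n / log Y_n → a almost surely). -/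
open MeasureTheory Filter Set

lemma log_step_lower {x h : ℝ} (hx : 0 < x) (hh : 0 < h) :
    h / x - (Real.log (x + h) - Real.log x) ≤ h / x - h / (x + h) := by
  have h1 := Real.one_sub_inv_le_log_of_pos (x := (x + h) / x) (by positivity)
  rw [Real.log_div (by positivity) hx.ne'] at h1
  have h2 : 1 - ((x + h) / x)⁻¹ = h / (x + h) := by field_simp; ring
  linarith

lemma log_step_upper {x h : ℝ} (hx : 0 < x) (hh : 0 < h) :
    0 ≤ h / x - (Real.log (x + h) - Real.log x) := by
  have h1 := Real.log_le_sub_one_of_pos (x := (x + h) / x) (by positivity)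
  rw [Real.log_div (by positivity) hx.ne'] at h1
  have h2 : (x + h) / x - 1 = h / x := by field_simp; ring
  linarith

/-- The part of the argument that concerns a single trajectory: boundedness of the compensated
log-difference `m` determines the logarithmic growth exponent. -/
lemma tendsto_log_ratio_of_bounded {a : ℝ} (ha : 1 < a) {x y m : ℕ → ℝ}
    (hx : ∀ n, 0 < x n) (hy : ∀ n, 0 < y n)
    (hstep : ∀ n, (x (n + 1) = x n + a ∧ y (n + 1) = y n) ∨
      (x (n + 1) = x n ∧ y (n + 1) = y n + 1))
    (hm0 : m 0 = 0)
    (hm : ∀ n, m (n + 1) = m n + ((x (n + 1) - x n) / x n - a * ((y (n + 1) - y n) / y n)))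
    {B : ℝ} (hB : ∀ n, |m n| ≤ B) :
    Tendsto (fun n => Real.log (y n) / Real.log (x n)) atTop (nhds (1 / a)) := by
  have ha0 : 0 < a := by linarith
  set E : ℕ → ℝ := fun n => Real.log (x n) - a * Real.log (y n) with hE
  have key : ∀ n, |m n - (E n - E 0)| ≤ (a / x 0 + a / y 0) - (a / x n + a / y n) := by
    intro n
    induction n with
    | zero => simp [hm0]
    | succ n ih =>
      rw [abs_le] at ih ⊢
      have hm' := hm n
      rcases hstep n with ⟨h1, h2⟩ | ⟨h1, h2⟩
      · have l1 := log_step_lower (hx n) ha0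
        have l2 := log_step_upper (hx n) ha0
        simp only [hE, h1, h2] at ih hm' ⊢
        simp only [add_sub_cancel_left, sub_self, zero_div, mul_zero, sub_zero] at hm'
        rw [hm']
        constructor <;> linarith [ih.1, ih.2]
      · have l1 := mul_le_mul_of_nonneg_left (log_step_lower (hy n) one_pos) ha0.le
        have l2 := mul_nonneg ha0.le (log_step_upper (hy n) one_pos)
        have e1 : a / y n = a * (1 / y n) := by ring
        have e2 : a / (y n + 1) = a * (1 / (y n + 1)) := by ring
        simp only [hE, h1, h2] at ih hm' ⊢
        simp only [add_sub_cancel_left, sub_self, zero_div, zero_sub] at hm'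
        rw [hm', e2]
        rw [e1] at ih
        constructor <;> linarith [ih.1, ih.2]
  obtain ⟨C, hC⟩ : ∃ C, ∀ n, |E n| ≤ C := by
    refine ⟨B + |E 0| + (a / x 0 + a / y 0), fun n => ?_⟩
    have k := key n
    have p1 : 0 < a / x n := div_pos ha0 (hx n)
    have p2 : 0 < a / y n := div_pos ha0 (hy n)
    have b := hB n
    have z1 := le_abs_self (E 0)
    have z2 := neg_abs_le (E 0)
    rw [abs_le] at k b ⊢
    constructor <;> linarith [k.1, k.2, b.1, b.2]
  have hmono : Monotone x := monotone_nat_of_le_succ fun n => by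
    rcases hstep n with ⟨h, -⟩ | ⟨h, -⟩ <;> linarith
  have hsum : ∀ n : ℕ, (n : ℝ) ≤ x n / a + y n := by
    intro n
    induction n with
    | zero => have := hx 0; have := hy 0; simp only [Nat.cast_zero]; positivity
    | succ n ih =>
      rcases hstep n with ⟨h1, h2⟩ | ⟨h1, h2⟩ <;> rw [h1, h2] <;> push_cast
      · rw [add_div, div_self ha0.ne']; linarith
      · linarith
  have hxtop : Tendsto x atTop atTop := by
    refine tendsto_atTop_atTop_of_monotone hmono fun R => ?_
    by_contra! hcon
    -- a bound on `x` bounds `y` through `E`, hence bounds `n ≤ x n / a + y n`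
    have hyb : ∀ n, y n ≤ Real.exp ((Real.log R + C) / a) := fun n => by
      rw [← Real.log_le_iff_le_exp (hy n), le_div_iff₀ ha0]
      have := (abs_le.1 (hC n)).1
      have h2 := Real.log_le_log (hx n) (hcon n).le
      simp only [hE] at this
      linarith
    obtain ⟨n, hn⟩ := exists_nat_gt (R / a + Real.exp ((Real.log R + C) / a))
    have h3 : x n / a ≤ R / a := by gcongr; exact (hcon n).le
    linarith [hsum n, hyb n]
  have hlog : Tendsto (fun n => Real.log (x n)) atTop atTop :=
    Real.tendsto_log_atTop.comp hxtop
  have hE0 : Tendsto (fun n => E n / Real.log (x n)) atTop (nhds 0) := by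
    refine squeeze_zero_norm' ?_ (hlog.const_div_atTop C)
    filter_upwards [hlog.eventually_gt_atTop 0] with n hn
    rw [Real.norm_eq_abs, abs_div, abs_of_pos hn]
    gcongr
    exact hC n
  have hfin : Tendsto (fun n => (1 - E n / Real.log (x n)) / a) atTop (nhds (1 / a)) := by
    simpa using (hE0.const_sub 1).div_const a
  refine hfin.congr' ?_
  filter_upwards [hlog.eventually_gt_atTop 0] with n hn
  simp only [hE]
  field_simp
  ring

section Probability

variable {Ω : Type*} {mΩ : MeasurableSpace Ω} {μ : Measure Ω} [IsProbabilityMeasure μ]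
  {ℱ : Filtration ℕ mΩ}

/-- A sum of bounded martingale differences whose squares are dominated by the decrements of a
bounded nonnegative process `W` converges almost surely: `∫ (M n)² + ∫ W n` is nonincreasing, so
`M` is bounded in `L²`. -/
lemma ae_tendsto_of_sq_le_potential {D W : ℕ → Ω → ℝ} {c C : ℝ}
    (hDm : ∀ n, Measurable[ℱ (n + 1)] (D n)) (hDc : ∀ n ω, |D n ω| ≤ c)
    (hD0 : ∀ n, μ[D n | ℱ n] =ᵐ[μ] 0)
    (hWm : ∀ n, Measurable (W n)) (hW0 : ∀ n ω, 0 ≤ W n ω) (hWC : ∀ n ω, W n ω ≤ C)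
    (hDW : ∀ n ω, (D n ω) ^ 2 ≤ W n ω - W (n + 1) ω) :
    ∀ᵐ ω ∂μ, ∃ l, Tendsto (fun n => ∑ k ∈ Finset.range n, D k ω) atTop (nhds l) := by
  set M : ℕ → Ω → ℝ := fun n ω => ∑ k ∈ Finset.range n, D k ω with hM
  have hMs : ∀ n ω, M (n + 1) ω = M n ω + D n ω := fun n ω => Finset.sum_range_succ _ _
  have hMm : ∀ n, Measurable[ℱ n] (M n) := fun n =>
    Finset.measurable_fun_sum _ fun k hk =>
      (hDm k).mono (ℱ.mono (Finset.mem_range.1 hk)) le_rfl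
  have hMm' : ∀ n, Measurable (M n) := fun n => (hMm n).mono (ℱ.le n) le_rfl
  have hDm' : ∀ n, Measurable (D n) := fun n => (hDm n).mono (ℱ.le _) le_rfl
  have hMc : ∀ n ω, |M n ω| ≤ n * c := fun n ω => by
    refine (Finset.abs_sum_le_sum_abs _ _).trans ?_
    refine (Finset.sum_le_sum fun k _ => hDc k ω).trans ?_
    simp
  have hDi : ∀ n, Integrable (D n) μ := fun n =>
    .of_bound (hDm' n).aestronglyMeasurable c (.of_forall fun ω => hDc n ω)
  have hMi : ∀ n, Integrable (M n) μ := fun n =>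
    .of_bound (hMm' n).aestronglyMeasurable _ (.of_forall fun ω => hMc n ω)
  have hWi : ∀ n, Integrable (W n) μ := fun n =>
    .of_bound (hWm n).aestronglyMeasurable C (.of_forall fun ω => by
      rw [Real.norm_eq_abs, abs_of_nonneg (hW0 n ω)]; exact hWC n ω)
  have hMDi : ∀ n, Integrable (M n * D n) μ := fun n =>
    (hDi n).bdd_mul (hMm' n).aestronglyMeasurable (.of_forall fun ω => hMc n ω)
  have hM2i : ∀ n, Integrable (fun ω => (M n ω) ^ 2) μ := fun n => by
    have := (hMi n).bdd_mul (hMm' n).aestronglyMeasurable (.of_forall fun ω => hMc n ω)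
    simpa only [pow_two] using this
  have hMD0 : ∀ n, ∫ ω, M n ω * D n ω ∂μ = 0 := fun n => by
    have h1 : μ[M n * D n | ℱ n] =ᵐ[μ] 0 := by
      refine (condExp_mul_of_stronglyMeasurable_left (hMm n).stronglyMeasurable
        (hMDi n) (hDi n)).trans ?_
      filter_upwards [hD0 n] with ω hω
      simp [hω]
    have h2 := integral_condExp (μ := μ) (f := M n * D n) (ℱ.le n)
    rw [integral_congr_ae h1] at h2
    simpa using h2.symm
  have hdec : ∀ n, ∫ ω, (M n ω) ^ 2 ∂μ + ∫ ω, W n ω ∂μ ≤ C := by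
    intro n
    induction n with
    | zero =>
      have : ∫ ω, W 0 ω ∂μ ≤ ∫ _, C ∂μ :=
        integral_mono (hWi 0) (integrable_const _) (hWC 0)
      simpa [hM] using this
    | succ n ih =>
      refine le_trans ?_ ih
      rw [← integral_add (hM2i _) (hWi _), ← integral_add (hM2i _) (hWi _)]
      have h3 : ∫ ω, ((M n ω) ^ 2 + W n ω) + 2 * (M n ω * D n ω) ∂μ
          = ∫ ω, (M n ω) ^ 2 + W n ω ∂μ := by
        have h := integral_add ((hM2i n).add (hWi n)) ((hMDi n).const_mul 2)
        simp only [Pi.add_apply, Pi.mul_apply, integral_const_mul, hMD0 n, mul_zero,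
          add_zero] at h
        exact h
      rw [← h3]
      refine integral_mono ((hM2i _).add (hWi _))
        (((hM2i n).add (hWi n)).add ((hMDi n).const_mul 2)) fun ω => ?_
      have := hDW n ω
      simp only [hMs]
      nlinarith
  have hmart : Martingale M ℱ μ := by
    refine martingale_of_condExp_sub_eq_zero_nat (fun n => (hMm n).stronglyMeasurable) hMi
      fun n => ?_
    have : M (n + 1) - M n = D n := by
      ext ω; simp [hMs]
    rw [this]
    exact hD0 n
  refine hmart.submartingale.exists_ae_tendsto_of_bdd (R := (C + 1).toNNReal) fun n => ?_
  rw [eLpNorm_one_eq_lintegral_enorm, ← ofReal_integral_norm_eq_lintegral_enorm (hMi n)]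
  refine ENNReal.ofReal_le_ofReal ?_
  have h4 : ∫ ω, ‖M n ω‖ ∂μ ≤ ∫ ω, ((M n ω) ^ 2 + 1) ∂μ := by
    refine integral_mono (hMi n).norm ((hM2i n).add (integrable_const _)) fun ω => ?_
    simp only [Real.norm_eq_abs]
    nlinarith [sq_abs (M n ω), sq_nonneg (|M n ω| - 1), abs_nonneg (M n ω)]
  rw [integral_add (hM2i n) (integrable_const _)] at h4
  have h5 : 0 ≤ ∫ ω, W n ω ∂μ := integral_nonneg (hW0 n)
  have := hdec n
  simp at h4
  simpa using by linarith

/-- The telescoping bound on the squared increment of the urn martingale. -/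
lemma sq_div_le_telescope {x h ε : ℝ} (hε : 0 < ε) (hx : ε ≤ x) (hh : 0 < h) :
    (h / x) ^ 2 ≤ (1 + h / ε) * (h / x - h / (x + h)) := by
  have hx0 : 0 < x := hε.trans_le hx
  have h1 : h / x - h / (x + h) = (h / x) ^ 2 / (1 + h / x) := by field_simp; ring
  rw [h1, mul_div_assoc', le_div_iff₀ (by positivity), mul_comm]
  gcongr

open scoped Classical in
/-- Convergence of the urn martingale on the event that both initial values are at least `ε`; the
cut-off makes the increments bounded, as `X 0` and `Y 0` may be arbitrarily close to `0`. -/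
lemma ae_tendsto_urn_martingale {a : ℝ} (ha : 1 < a) {X Y : ℕ → Ω → ℝ}
    (hXY : IsUrn μ ℱ a 0 0 1 X Y) {ε : ℝ} (hε : 0 < ε) :
    ∀ᵐ ω ∂μ, (ε ≤ X 0 ω ∧ ε ≤ Y 0 ω) → ∃ l, Tendsto (fun n => ∑ k ∈ Finset.range n,
      ((X (k + 1) ω - X k ω) / X k ω - a * ((Y (k + 1) ω - Y k ω) / Y k ω))) atTop (nhds l) := by
  obtain ⟨hXm, hYm, hX, hY, hstep, hcX, hcY⟩ := hXY
  have ha0 : 0 < a := by linarith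
  set A : Set Ω := {ω | ε ≤ X 0 ω ∧ ε ≤ Y 0 ω} with hA
  have hAm : ∀ n, MeasurableSet[ℱ n] A := fun n =>
    ℱ.mono (Nat.zero_le n) _
      ((measurableSet_le measurable_const (hXm 0)).inter
        (measurableSet_le measurable_const (hYm 0)))
  have hXmono : ∀ ω, Monotone fun n => X n ω := fun ω => monotone_nat_of_le_succ fun n => by
    rcases hstep n ω with ⟨h, -⟩ | ⟨h, -⟩ <;> rw [h] <;> linarith
  have hYmono : ∀ ω, Monotone fun n => Y n ω := fun ω => monotone_nat_of_le_succ fun n => by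
    rcases hstep n ω with ⟨-, h⟩ | ⟨-, h⟩ <;> rw [h] <;> linarith
  have hXε : ∀ n ω, ω ∈ A → ε ≤ X n ω := fun n ω h => h.1.trans (hXmono ω (Nat.zero_le n))
  have hYε : ∀ n ω, ω ∈ A → ε ≤ Y n ω := fun n ω h => h.2.trans (hYmono ω (Nat.zero_le n))
  set D : ℕ → Ω → ℝ := fun n => A.indicator fun ω =>
    (X (n + 1) ω - X n ω) / X n ω - a * ((Y (n + 1) ω - Y n ω) / Y n ω) with hD
  set K : ℝ := 1 + a / ε with hK
  have hK0 : 0 < K := by positivity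
  set W : ℕ → Ω → ℝ := fun n => A.indicator fun ω =>
    K * (a / X n ω) + a ^ 2 * (K * (1 / Y n ω)) with hW
  set f : ℕ → Ω → ℝ := fun n => A.indicator fun ω => a / X n ω with hf
  set g : ℕ → Ω → ℝ := fun n => A.indicator fun ω => a / Y n ω with hg
  set sX : ℕ → Ω → ℝ := fun n ω =>
    if X (n + 1) ω = X n ω + a ∧ Y (n + 1) ω = Y n ω + 0 then (1 : ℝ) else 0 with hsX
  set sY : ℕ → Ω → ℝ := fun n ω =>
    if X (n + 1) ω = X n ω + 0 ∧ Y (n + 1) ω = Y n ω + 1 then (1 : ℝ) else 0 with hsY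
  have hXm' : ∀ n, Measurable[ℱ (n + 1)] (X n) := fun n =>
    (hXm n).mono (ℱ.mono n.le_succ) le_rfl
  have hYm' : ∀ n, Measurable[ℱ (n + 1)] (Y n) := fun n =>
    (hYm n).mono (ℱ.mono n.le_succ) le_rfl
  have hDm : ∀ n, Measurable[ℱ (n + 1)] (D n) := fun n =>
    Measurable.indicator ((((hXm (n + 1)).sub (hXm' n)).div (hXm' n)).sub
      ((((hYm (n + 1)).sub (hYm' n)).div (hYm' n)).const_mul a)) (hAm _)
  have hfm : ∀ n, Measurable[ℱ n] (f n) := fun n =>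
    Measurable.indicator (measurable_const.div (hXm n)) (hAm n)
  have hgm : ∀ n, Measurable[ℱ n] (g n) := fun n =>
    Measurable.indicator (measurable_const.div (hYm n)) (hAm n)
  have hWm : ∀ n, Measurable (W n) := fun n =>
    (Measurable.indicator (((measurable_const.div (hXm n)).const_mul K).add
      (((measurable_const.div (hYm n)).const_mul K).const_mul (a ^ 2))) (hAm n)).mono
      (ℱ.le n) le_rfl
  have hfb : ∀ n ω, ‖f n ω‖ ≤ a / ε := fun n ω => by
    by_cases h : ω ∈ A
    · simp only [hf, indicator_of_mem h]
      have := hX n ω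
      rw [Real.norm_of_nonneg (by positivity)]
      gcongr
      exact hXε n ω h
    · simp only [hf, indicator_of_notMem h, norm_zero]
      positivity
  have hgb : ∀ n ω, ‖g n ω‖ ≤ a / ε := fun n ω => by
    by_cases h : ω ∈ A
    · simp only [hg, indicator_of_mem h]
      have := hY n ω
      rw [Real.norm_of_nonneg (by positivity)]
      gcongr
      exact hYε n ω h
    · simp only [hg, indicator_of_notMem h, norm_zero]
      positivity
  have hX1 : ∀ n, Measurable (X n) := fun n => (hXm n).mono (ℱ.le n) le_rfl
  have hY1 : ∀ n, Measurable (Y n) := fun n => (hYm n).mono (ℱ.le n) le_rfl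
  have hsXi : ∀ n, Integrable (sX n) μ := fun n => by
    refine .of_bound (Measurable.ite ?_ measurable_const
      measurable_const).aestronglyMeasurable 1 (.of_forall fun ω => ?_)
    · exact (measurableSet_eq_fun (hX1 _) ((hX1 n).add_const a)).inter
        (measurableSet_eq_fun (hY1 _) ((hY1 n).add_const 0))
    · simp only [hsX]; split_ifs <;> simp
  have hsYi : ∀ n, Integrable (sY n) μ := fun n => by
    refine .of_bound (Measurable.ite ?_ measurable_const
      measurable_const).aestronglyMeasurable 1 (.of_forall fun ω => ?_)
    · exact (measurableSet_eq_fun (hX1 _) ((hX1 n).add_const 0)).inter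
        (measurableSet_eq_fun (hY1 _) ((hY1 n).add_const 1))
    · simp only [hsY]; split_ifs <;> simp
  have hDeq : ∀ n, D n = f n * sX n - g n * sY n := fun n => by
    ext ω
    by_cases h : ω ∈ A
    · simp only [hD, hf, hg, hsX, hsY, Pi.sub_apply, Pi.mul_apply, indicator_of_mem h]
      rcases hstep n ω with ⟨h1, h2⟩ | ⟨h1, h2⟩
      · simp [h1, h2, ha0.ne']
      · simp [h1, h2]
        ring
    · simp [hD, hf, hg, indicator_of_notMem h]
  have hD0 : ∀ n, μ[D n | ℱ n] =ᵐ[μ] 0 := fun n => by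
    rw [hDeq n]
    have i1 : Integrable (f n * sX n) μ := (hsXi n).bdd_mul
      ((hfm n).mono (ℱ.le n) le_rfl).aestronglyMeasurable (.of_forall (hfb n))
    have i2 : Integrable (g n * sY n) μ := (hsYi n).bdd_mul
      ((hgm n).mono (ℱ.le n) le_rfl).aestronglyMeasurable (.of_forall (hgb n))
    filter_upwards [condExp_sub i1 i2 (ℱ n),
      condExp_mul_of_stronglyMeasurable_left (hfm n).stronglyMeasurable i1 (hsXi n),
      condExp_mul_of_stronglyMeasurable_left (hgm n).stronglyMeasurable i2 (hsYi n),
      hcX n, hcY n] with ω e1 e2 e3 e4 e5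
    rw [e1, Pi.sub_apply, e2, e3, Pi.mul_apply, Pi.mul_apply, e4, e5]
    by_cases h : ω ∈ A
    · simp only [hf, hg, indicator_of_mem h, Pi.zero_apply]
      have := hX n ω
      have := hY n ω
      field_simp
      ring
    · simp [hf, hg, indicator_of_notMem h]
  have hDc : ∀ n ω, |D n ω| ≤ a / ε := fun n ω => by
    have hb1 := hfb n ω
    have hb2 := hgb n ω
    rw [hDeq n]
    simp only [Pi.sub_apply, Pi.mul_apply, hsX, hsY]
    rcases hstep n ω with ⟨h1, h2⟩ | ⟨h1, h2⟩
    · simpa [h1, h2, ha0.ne'] using hb1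
    · simpa [h1, h2, ha0.ne] using hb2
  have hW0 : ∀ n ω, 0 ≤ W n ω := fun n ω => indicator_nonneg (fun ω _ => by
    have := hX n ω
    have := hY n ω
    positivity) ω
  have hWC : ∀ n ω, W n ω ≤ K * (a / ε) + a ^ 2 * (K * (1 / ε)) := fun n ω => by
    by_cases h : ω ∈ A
    · simp only [hW, indicator_of_mem h]
      have := hXε n ω h
      have := hYε n ω h
      gcongr
    · simp only [hW, indicator_of_notMem h]
      positivity
  have hDW : ∀ n ω, (D n ω) ^ 2 ≤ W n ω - W (n + 1) ω := fun n ω => by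
    by_cases h : ω ∈ A
    · simp only [hD, hW, indicator_of_mem h]
      rcases hstep n ω with ⟨h1, h2⟩ | ⟨h1, h2⟩
      · have := sq_div_le_telescope hε (hXε n ω h) ha0
        rw [h1, h2]
        simp only [add_sub_cancel_left, add_zero, sub_self, zero_div, mul_zero, sub_zero]
        linarith
      · have h3 := sq_div_le_telescope hε (hYε n ω h) one_pos
        have hy := hY n ω
        have h4 : 0 ≤ 1 / Y n ω - 1 / (Y n ω + 1) :=
          sub_nonneg.2 (one_div_le_one_div_of_le hy (by linarith))
        have h5 : 1 + 1 / ε ≤ K := by rw [hK]; gcongr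
        have h6 := mul_le_mul_of_nonneg_left
          (h3.trans (mul_le_mul_of_nonneg_right h5 h4)) (sq_nonneg a)
        rw [h1, h2]
        simp only [add_sub_cancel_left, add_zero, sub_self, zero_div, zero_sub, neg_sq, mul_pow]
        linarith
    · simp [hD, hW, indicator_of_notMem h]
  filter_upwards [ae_tendsto_of_sq_le_potential hDm hDc hD0 hWm hW0 hWC hDW] with ω hω hωA
  have hωA' : ω ∈ A := hωA
  simpa only [hD, indicator_of_mem hωA'] using hω

end Probability

/-- For the generalized urn process with parameters `(a, 0, 0, 1)`, `a > 1`, one has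
`log Yₙ / log Xₙ → 1/a` almost surely (equivalently `log Xₙ / log Yₙ → a`). -/
theorem urn_log_ratio_tendsto
    {Ω : Type*} {mΩ : MeasurableSpace Ω} (μ : Measure Ω) [IsProbabilityMeasure μ]
    (ℱ : Filtration ℕ mΩ) (a : ℝ) (ha : 1 < a)
    (X Y : ℕ → Ω → ℝ) (hXY : IsUrn μ ℱ a 0 0 1 X Y) :
    ∀ᵐ ω ∂μ, Tendsto (fun n => Real.log (Y n ω) / Real.log (X n ω))
      atTop (nhds (1 / a)) := by
  have hall : ∀ᵐ ω ∂μ, ∀ N : ℕ, (1 / ((N : ℝ) + 1) ≤ X 0 ω ∧ 1 / ((N : ℝ) + 1) ≤ Y 0 ω) →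
      ∃ l, Tendsto (fun n => ∑ k ∈ Finset.range n,
        ((X (k + 1) ω - X k ω) / X k ω - a * ((Y (k + 1) ω - Y k ω) / Y k ω)))
        atTop (nhds l) :=
    ae_all_iff.2 fun N => ae_tendsto_urn_martingale ha hXY Nat.one_div_pos_of_nat
  obtain ⟨-, -, hX, hY, hstep, -, -⟩ := hXY
  filter_upwards [hall] with ω hω
  obtain ⟨N, hN⟩ := exists_nat_one_div_lt (lt_min (hX 0 ω) (hY 0 ω))
  obtain ⟨l, hl⟩ := hω N ⟨(hN.trans_le (min_le_left _ _)).le, (hN.trans_le (min_le_right _ _)).le⟩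
  obtain ⟨B, hB⟩ := (Metric.isBounded_range_of_tendsto _ hl).exists_norm_le
  exact tendsto_log_ratio_of_bounded ha (fun n => hX n ω) (fun n => hY n ω)
    (fun n => by simpa using hstep n ω) (by simp) (fun n => Finset.sum_range_succ _ _)
    (B := B) (fun n => hB _ (mem_range_self n))
end

section
/- Let X be a vertex-reinforced random walk on ℤ started at 0 with range R. There is an ε > 0 such that for all integers m > 0, P(m+3 ∈ R and m ∈ R) ≤ (1 − ε) · P(m ∈ R); that is, the conditional probability that the walk ever reaches m+3 given that it reaches m is at most 1 − ε, uniformly in m. -/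
/-!
Fix `m > 0` and let `A, B, C, D` be the augmented occupation numbers of `m - 1, m, m + 1, m + 2`.
The probability of ever reaching `m + 3` after reaching `m` is bounded by an explicit
supermartingale, started when `m` is first visited.

The proportions `z = C / (A + C)` and `w = D / (B + D)` are those of the urns at `m` and `m + 1`.
A step from `m + 1` leaves `w` unchanged in mean, while a move from `m` to `m - 1`, once the walk
is back at `m`, decreases it by a factor of about `1 - 1 / (B + D)`. As long as `A ≥ C` such moves
are frequent. The mean decrease of `w` per passage through `m` is then at least a constant
multiple of `w / C`, which is also the order of the probability of being lost to `m + 3` per visit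
to `m + 1` and of the increase of `z` due to visits from `m + 2`. Hence `2 z + 24 w`, with small
corrections at `m + 1` and `m + 2`, is a supermartingale as long as it is below `1`
(`uM_step`, `uR_step`, `uRR_step`).
It is decreasing in `A`, so the walk on the left of `m`, where nothing is known about the occupation
numbers, can only improve the bound (`uM_anti`, `val_upd_le`).

At the first visit to `m` that potential exceeds `1`. However, while `m + 1` is unvisited the walk
at `m` moves left with probability `A / (A + 1) ≥ B / (B + 1)`, hence `1 - B / 102` is a
supermartingale as long as the walk does so, and when `B = 51` the potential is below
`1 / 2 = 1 - 51 / 102`. This gives the value `1 - 2 / 102 = 50 / 51` at the first visit to `m`.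

The resulting function `val` of the finitely many relevant counts is shown to decrease in mean along
the walk (`integral_val_succ_le`), which bounds the probability of having visited both `m` and
`m + 3` by time `n` (`measure_reach_le`); then `n` tends to infinity.
-/

open MeasureTheory Filter Set

/-- Augmented occupation number: one plus the number of visits of `X` to `w` up through
time `n`. -/
noncomputable def occ {Ω : Type*} (X : ℕ → Ω → ℤ) (n : ℕ) (w : ℤ) (ω : Ω) : ℝ :=
  1 + ((Finset.range (n + 1)).filter (fun i => X i ω = w)).card

/-- Vertex-reinforced random walk on `ℤ` started at `v`: adapted, starts at `v`, and the
conditional probability of moving to `x` is `1_{|x - Xₙ| = 1} Z(n,x)/(Z(n,Xₙ-1)+Z(n,Xₙ+1))`. -/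
def IsVRRW {Ω : Type*} {mΩ : MeasurableSpace Ω} (μ : Measure Ω)
    (ℱ : Filtration ℕ mΩ) (v : ℤ) (X : ℕ → Ω → ℤ) : Prop :=
  Adapted ℱ X ∧ (∀ ω, X 0 ω = v) ∧
    ∀ n x, (μ[fun ω => if X (n + 1) ω = x then (1 : ℝ) else 0 | ℱ n]) =ᵐ[μ]
      fun ω => if |x - X n ω| = 1 then
        occ X n x ω / (occ X n (X n ω - 1) ω + occ X n (X n ω + 1) ω) else 0


/-! ### The potentials and their one-step inequalities

Here `A, B, C, D` are the augmented occupation numbers of `m - 1, m, m + 1, m + 2`. -/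

/-- Potential when the walk stands at `m`: `C / (A + C)` and `D / (B + D)` are the proportions of
the two urns at `m` and `m + 1` that push the walk to the right. The coefficient `2` makes the
potential at least `1` as soon as `A ≤ C`, and `24` is large enough for the decrease of the second
proportion at each move `m → m - 1` to pay for the extra terms in `hG` and `hK`. -/
noncomputable def hF (A B C D : ℝ) : ℝ := 2 * (C / (A + C)) + 24 * (D / (B + D))
/-- Potential when the walk stands at `m + 1`. The correction bounds what visits to `m + 2` cost
before the next return to `m`. -/
noncomputable def hG (A B C D : ℝ) : ℝ := hF A B C D + 6 * (D / (B + D)) / (C + 1)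
/-- Potential when the walk stands at `m + 2`. The term `3 / (C + 1)` pays for the jump to `m + 3`,
of probability `1 / (C + 1)`, and for the extra visit to `m + 1` that follows otherwise. -/
noncomputable def hK (A B C D : ℝ) : ℝ :=
  hF A B C D + 3 / (C + 1) + 6 * (D / (B + D)) / (C + 2)

/-- The urn `C / (A + C)` is a martingale under a step from `m`, so only the drift of
`D / (B + D)` and the correction in `hG` remain. -/
lemma hF_step {A B C D : ℝ} (hA : 0 < A) (hB : 0 < B) (hC : 0 < C) (hD : 0 < D)
    (h : C * (B + D + 1) ≤ 4 * (A * (C + 2))) :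
    A * hF (A + 1) (B + 1) C D + C * hG A B (C + 1) D ≤ (A + C) * hF A B C D := by
  have key : (A + C) * hF A B C D - (A * hF (A + 1) (B + 1) C D + C * hG A B (C + 1) D)
      = 6 * D * (4 * (A * (C + 2)) - C * (B + D + 1)) / ((B + D) * (B + D + 1) * (C + 2)) := by
    have h1 : A + 1 + C ≠ 0 := by positivity
    have h2 : A + (C + 1) ≠ 0 := by positivity
    have h3 : B + 1 + D ≠ 0 := by positivity
    have h4 : B + D + 1 ≠ 0 := by positivity
    have h5 : C + 1 + 1 ≠ 0 := by positivity
    unfold hG hF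
    rw [show A + (C + 1) = A + 1 + C by ring, show B + D + 1 = B + 1 + D by ring,
      show C + 1 + 1 = C + 2 by ring]
    field_simp
    ring
  have : 0 ≤ 6 * D * (4 * (A * (C + 2)) - C * (B + D + 1)) /
      ((B + D) * (B + D + 1) * (C + 2)) := by
    apply div_nonneg _ (by positivity)
    exact mul_nonneg (by positivity) (by linarith)
  linarith

/-- `D / (B + D)` is a martingale under a step from `m + 1`; the corrections are compared using
`(D + 1) / (B + D + 1) ≤ 1 / 2`. -/
lemma hG_step {A B C D : ℝ} (hA : 0 < A) (hB : 0 < B) (hC : 0 < C) (hD : 0 < D)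
    (h : D + 1 ≤ B) :
    B * hF A (B + 1) C D + D * hK A B C (D + 1) ≤ (B + D) * hG A B C D := by
  have key : (B + D) * hG A B C D - (B * hF A (B + 1) C D + D * hK A B C (D + 1))
      = 3 * D * (1 / (C + 1) - 2 * ((D + 1) / (B + D + 1)) / (C + 2)) := by
    have h3 : B + 1 + D ≠ 0 := by positivity
    have h4 : B + (D + 1) ≠ 0 := by positivity
    unfold hG hK hF
    rw [show B + (D + 1) = B + 1 + D by ring, show B + D + 1 = B + 1 + D by ring]
    field_simp
    ring
  have h1 : 2 * ((D + 1) / (B + D + 1)) ≤ 1 := by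
    rw [← mul_div_assoc, div_le_one (by positivity)]; linarith
  have h2 : 2 * ((D + 1) / (B + D + 1)) / (C + 2) ≤ 1 / (C + 1) := by
    apply div_le_div₀ (by norm_num) h1 (by positivity) (by linarith)
  have : 0 ≤ 3 * D * (1 / (C + 1) - 2 * ((D + 1) / (B + D + 1)) / (C + 2)) :=
    mul_nonneg (by positivity) (by linarith)
  linarith

/-- The summand `1` is the value of a walk that has moved to `m + 3`. -/
lemma hK_step {A B C D : ℝ} (hA : 0 < A) (hB : 0 < B) (hC : 0 < C) (hD : 0 < D) :
    C * hG A B (C + 1) D + 1 ≤ (C + 1) * hK A B C D := by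
  have key : (C + 1) * hK A B C D - (C * hG A B (C + 1) D + 1)
      = 24 * (D / (B + D)) + 6 * (D / (B + D)) / (C + 2)
        + 2 * (1 - C * A / ((A + C) * (A + C + 1))) + 2 * (C / (A + C)) := by
    have h2 : A + (C + 1) ≠ 0 := by positivity
    have h5 : C + 1 + 1 ≠ 0 := by positivity
    unfold hG hK hF
    rw [show C + 1 + 1 = C + 2 by ring, show A + C + 1 = A + (C + 1) by ring]
    field_simp
    ring
  have h1 : C * A / ((A + C) * (A + C + 1)) ≤ 1 := by
    rw [div_le_one (by positivity)]; nlinarith [mul_pos hA hC]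
  have : 0 ≤ 24 * (D / (B + D)) + 6 * (D / (B + D)) / (C + 2) + 2 * (C / (A + C)) := by
    positivity
  linarith

/-! ### The capped value functions in terms of visit counts -/

/-- Bound on the probability of ever reaching `m + 3` when the walk stands at `m` and has visited
`m - 1, m, m + 1, m + 2` respectively `a, b, c, d` times. The last term of the minimum covers the
initial stage, in which `m + 1` has not been visited yet: it decreases linearly in `b`, down to
`1 / 2` at `b = 50`, where `hF` takes over. -/
noncomputable def uM (a b c d : ℕ) : ℝ :=
  min (min 1 (hF (a + 1) (b + 1) (c + 1) (d + 1)))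
    (if c = 0 ∧ d = 0 ∧ b ≤ a ∧ b ≤ 50 then 1 - ((b : ℝ) + 1) / 102 else 1)

/-- The analogue of `uM` for a walk standing at `m + 1`. -/
noncomputable def uR (a b c d : ℕ) : ℝ := min 1 (hG (a + 1) (b + 1) (c + 1) (d + 1))

/-- The analogue of `uM` for a walk standing at `m + 2`. -/
noncomputable def uRR (a b c d : ℕ) : ℝ := min 1 (hK (a + 1) (b + 1) (c + 1) (d + 1))

lemma uM_le_one (a b c d : ℕ) : uM a b c d ≤ 1 := (min_le_left _ _).trans (min_le_left _ _)
lemma uM_le_hF (a b c d : ℕ) : uM a b c d ≤ hF (a + 1) (b + 1) (c + 1) (d + 1) :=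
  (min_le_left _ _).trans (min_le_right _ _)

lemma uM_nonneg (a b c d : ℕ) : 0 ≤ uM a b c d := by
  unfold uM hF
  refine le_min (le_min zero_le_one (by positivity)) ?_
  split_ifs with h
  · have : (b : ℝ) ≤ 50 := by exact_mod_cast h.2.2.2
    linarith
  · exact zero_le_one

lemma uR_nonneg (a b c d : ℕ) : 0 ≤ uR a b c d := by
  unfold uR hG hF; positivity

lemma uRR_nonneg (a b c d : ℕ) : 0 ≤ uRR a b c d := by
  unfold uRR hK hF; positivity

/-- Extra visits to `m - 1`, in particular those coming from `m - 2`, only help. This is what makes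
any control of the walk to the left of `m` unnecessary. -/
lemma uM_anti (a b c d : ℕ) : uM (a + 1) b c d ≤ uM a b c d := by
  unfold uM
  refine min_le_min (min_le_min le_rfl ?_) ?_
  · unfold hF
    push_cast
    gcongr
    linarith
  · split_ifs with h1 h2 h2
    · exact le_rfl
    · have : (0 : ℝ) ≤ b := b.cast_nonneg
      linarith
    · omega
    · exact le_rfl

/-- The value at the first visit to `m`. -/
lemma uM_start (a : ℕ) (ha : 1 ≤ a) : uM a 1 0 0 ≤ 50 / 51 := by
  unfold uM
  refine (min_le_right _ _).trans ?_
  rw [if_pos ⟨rfl, rfl, ha, by norm_num⟩]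
  norm_num

/-- One-step inequality at `m`. The hypothesis holds because each visit to `m` follows a visit to
`m - 1` or to `m + 1`. -/
lemma uM_step (a b c d : ℕ) (h : b ≤ a + c) :
    ((a : ℝ) + 1) * uM (a + 1) (b + 1) c d + ((c : ℝ) + 1) * uR a b (c + 1) d
      ≤ ((a : ℝ) + 1 + (c + 1)) * uM a b c d := by
  have ha : (0 : ℝ) ≤ a := a.cast_nonneg
  have hb : (0 : ℝ) ≤ b := b.cast_nonneg
  have hc : (0 : ℝ) ≤ c := c.cast_nonneg
  have hd : (0 : ℝ) ≤ d := d.cast_nonneg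
  have hR1 : uR a b (c + 1) d ≤ 1 := min_le_left _ _
  have hM1 := uM_le_one (a + 1) (b + 1) c d
  -- it suffices to bound the left side by each of the three terms of the minimum
  have hone : ((a : ℝ) + 1) * uM (a + 1) (b + 1) c d + ((c : ℝ) + 1) * uR a b (c + 1) d
      ≤ ((a : ℝ) + 1 + (c + 1)) * 1 := by nlinarith
  have hhF : ((a : ℝ) + 1) * uM (a + 1) (b + 1) c d + ((c : ℝ) + 1) * uR a b (c + 1) d
      ≤ ((a : ℝ) + 1 + (c + 1)) * min 1 (hF (a + 1) (b + 1) (c + 1) (d + 1)) := by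
    rcases le_total 1 (hF ((a : ℝ) + 1) (b + 1) (c + 1) (d + 1)) with h1 | h1
    · rwa [min_eq_left h1]
    · rw [min_eq_right h1]
      have hz : ((c : ℝ) + 1) / (a + 1 + (c + 1)) ≤ 1 / 2 := by
        have : 0 ≤ ((d : ℝ) + 1) / (b + 1 + (d + 1)) := by positivity
        unfold hF at h1; linarith
      have hw : ((d : ℝ) + 1) / (b + 1 + (d + 1)) ≤ 1 / 24 := by
        have : 0 ≤ ((c : ℝ) + 1) / (a + 1 + (c + 1)) := by positivity
        unfold hF at h1; linarith
      rw [div_le_iff₀ (by positivity)] at hz hw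
      have hbac : (b : ℝ) ≤ a + c := by exact_mod_cast h
      have hcond : ((c : ℝ) + 1) * ((b + 1) + (d + 1) + 1) ≤ 4 * ((a + 1) * ((c + 1) + 2)) := by
        have : ((b : ℝ) + 1) + (d + 1) + 1 ≤ 4 * (a + 1) := by linarith
        nlinarith
      refine le_trans ?_ (hF_step (by positivity) (by positivity) (by positivity)
        (by positivity) hcond)
      have e1 := uM_le_hF (a + 1) (b + 1) c d
      have e2 : uR a b (c + 1) d ≤ hG (a + 1) (b + 1) ((c + 1 : ℕ) + 1) (d + 1) := min_le_right _ _
      push_cast at e1 e2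
      gcongr
  by_cases hi : c = 0 ∧ d = 0 ∧ b ≤ a ∧ b ≤ 50
  · unfold uM at hhF ⊢
    rw [if_pos hi]
    rcases le_total (min 1 (hF ((a : ℝ) + 1) (b + 1) (c + 1) (d + 1)))
      (1 - ((b : ℝ) + 1) / 102) with h2 | h2
    · rwa [min_eq_left h2]
    · rw [min_eq_right h2]
      change ((a : ℝ) + 1) * uM (a + 1) (b + 1) c d + _ ≤ _
      obtain ⟨rfl, rfl, hba, hb50⟩ := hi
      have hba' : (b : ℝ) ≤ a := by exact_mod_cast hba
      rcases Nat.lt_or_ge b 50 with hb' | hb'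
      · have : uM (a + 1) (b + 1) 0 0 ≤ 1 - (((b + 1 : ℕ) : ℝ) + 1) / 102 := by
          unfold uM
          refine (min_le_right _ _).trans ?_
          rw [if_pos ⟨rfl, rfl, by omega, by omega⟩]
        push_cast at this
        push_cast at hR1 ⊢
        nlinarith
      · -- at `b = 50` the value `hF` has already dropped to `1 / 2`
        obtain rfl : b = 50 := by omega
        refine hhF.trans ?_
        have h50 : (50 : ℝ) ≤ a := by exact_mod_cast hba
        have hz : (1 : ℝ) / (a + 2) ≤ 1 / 52 :=
          one_div_le_one_div_of_le (by norm_num) (by linarith)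
        gcongr
        refine (min_le_right _ _).trans ?_
        unfold hF
        push_cast
        rw [show (a : ℝ) + 1 + (0 + 1) = a + 2 by ring, zero_add]
        norm_num at hz ⊢
        linarith
  · unfold uM at hhF ⊢
    rw [if_neg hi, min_eq_left (min_le_left _ _)]
    exact hhF

lemma uR_step (a b c d : ℕ) :
    ((b : ℝ) + 1) * uM a (b + 1) c d + ((d : ℝ) + 1) * uRR a b c (d + 1)
      ≤ ((b : ℝ) + 1 + (d + 1)) * uR a b c d := by
  have hb : (0 : ℝ) ≤ b := b.cast_nonneg
  have hd : (0 : ℝ) ≤ d := d.cast_nonneg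
  have hM1 := uM_le_one a (b + 1) c d
  have hK1 : uRR a b c (d + 1) ≤ 1 := min_le_left _ _
  unfold uR
  rcases le_total 1 (hG ((a : ℝ) + 1) (b + 1) (c + 1) (d + 1)) with h1 | h1
  · rw [min_eq_left h1]; nlinarith
  · rw [min_eq_right h1]
    have hw : ((d : ℝ) + 1) / (b + 1 + (d + 1)) ≤ 1 / 24 := by
      have : 0 ≤ ((c : ℝ) + 1) / (a + 1 + (c + 1)) := by positivity
      have : 0 ≤ 6 * (((d : ℝ) + 1) / (b + 1 + (d + 1))) / (c + 1 + 1) := by positivity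
      unfold hG hF at h1; linarith
    rw [div_le_iff₀ (by positivity)] at hw
    refine le_trans ?_ (hG_step (by positivity) (by positivity) (by positivity)
      (by positivity) (by linarith))
    have e1 := uM_le_hF a (b + 1) c d
    have e2 : uRR a b c (d + 1) ≤ hK (a + 1) (b + 1) (c + 1) ((d + 1 : ℕ) + 1) := min_le_right _ _
    push_cast at e1 e2
    gcongr

lemma uRR_step (a b c d : ℕ) :
    ((c : ℝ) + 1) * uR a b (c + 1) d + 1 ≤ ((c : ℝ) + 1 + 1) * uRR a b c d := by
  have hc : (0 : ℝ) ≤ c := c.cast_nonneg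
  have hR1 : uR a b (c + 1) d ≤ 1 := min_le_left _ _
  unfold uRR
  rcases le_total 1 (hK ((a : ℝ) + 1) (b + 1) (c + 1) (d + 1)) with h1 | h1
  · rw [min_eq_left h1]; nlinarith
  · rw [min_eq_right h1]
    refine le_trans ?_ (hK_step (by positivity) (by positivity) (by positivity) (by positivity))
    have e2 : uR a b (c + 1) d ≤ hG (a + 1) (b + 1) ((c + 1 : ℕ) + 1) (d + 1) := min_le_right _ _
    push_cast at e2
    gcongr

/-! ### A countable state space -/

/-- States `(y, a, b, c, d, e)`: the position `y` relative to `m`, and the numbers of visits to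
`m - 1, m, m + 1, m + 2, m + 3`. -/
abbrev St : Type := ℤ × ℕ × ℕ × ℕ × ℕ × ℕ

/-- The state after a step to relative position `y`. -/
def upd (p : St) (y : ℤ) : St :=
  (y, p.2.1 + (if y = -1 then 1 else 0), p.2.2.1 + (if y = 0 then 1 else 0),
    p.2.2.2.1 + (if y = 1 then 1 else 0), p.2.2.2.2.1 + (if y = 2 then 1 else 0),
    p.2.2.2.2.2 + (if y = 3 then 1 else 0))

/-- Constraints on states satisfied along every nearest-neighbour path started to the left
of `m`. -/
def Consistent : St → Prop
  | (y, a, b, c, d, e) => (e = 0 → y ≤ 2) ∧ (b = 0 → y < 0 ∧ c = 0 ∧ d = 0 ∧ e = 0) ∧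
      (y = -1 → 1 ≤ a) ∧ (y = 0 → b ≤ a + c) ∧ (y ≠ 0 → 1 ≤ b → b + 1 ≤ a + c)

/-- The value function on states with `e = 0`. To the left of `m` it is the value that the walk
will have on its next arrival at `m`. -/
noncomputable def uSt : St → ℝ
  | (y, a, b, c, d, _) =>
    if y < 0 then uM a (b + 1) c d else if y = 0 then uM a b c d
    else if y = 1 then uR a b c d else uRR a b c d

open Classical in
/-- The function of the state that is a supermartingale along the walk. It is `0` before `m` is
visited, and afterwards the value function (`1` once `m + 3` has been visited) minus `50 / 51`.
Inconsistent states get the maximal value `1 / 51`, so that nothing has to be checked there. -/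
noncomputable def val (p : St) : ℝ :=
  if Consistent p then
    if p.2.2.1 = 0 then 0
    else if p.2.2.2.2.2 = 0 then uSt p - 50 / 51 else 1 / 51
  else 1 / 51

lemma val_of {p : St} (hp : Consistent p) : val p =
    if p.2.2.1 = 0 then 0
    else if p.2.2.2.2.2 = 0 then uSt p - 50 / 51 else 1 / 51 := if_pos hp

lemma uSt_nonneg (p : St) : 0 ≤ uSt p := by
  obtain ⟨y, a, b, c, d, e⟩ := p
  simp only [uSt]
  split_ifs
  exacts [uM_nonneg _ _ _ _, uM_nonneg _ _ _ _, uR_nonneg _ _ _ _, uRR_nonneg _ _ _ _]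

lemma uSt_le_one (p : St) : uSt p ≤ 1 := by
  obtain ⟨y, a, b, c, d, e⟩ := p
  simp only [uSt]
  split_ifs
  exacts [uM_le_one _ _ _ _, uM_le_one _ _ _ _, min_le_left _ _, min_le_left _ _]

lemma val_le (p : St) : val p ≤ 1 / 51 := by
  have := uSt_le_one p
  unfold val
  split_ifs <;> linarith

lemma le_val (p : St) :
    (if p.2.2.1 ≠ 0 ∧ p.2.2.2.2.2 ≠ 0 then (1 : ℝ) else 0)
      - 50 / 51 * (if p.2.2.1 ≠ 0 then (1 : ℝ) else 0) ≤ val p := by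
  have := uSt_nonneg p
  unfold val
  split_ifs <;> first | linarith | tauto

lemma abs_val_le (p : St) : |val p| ≤ 1 := by
  have h1 := val_le p
  have h2 := le_val p
  rw [abs_le]
  constructor
  · refine le_trans ?_ h2
    split_ifs <;> norm_num
  · linarith

lemma Consistent.upd {p : St} (hp : Consistent p) {y : ℤ} (hy : |y - p.1| = 1) :
    Consistent (upd p y) := by
  obtain ⟨x, a, b, c, d, e⟩ := p
  simp only [Consistent, _root_.upd] at *
  have : y = x + 1 ∨ y = x - 1 := by
    rcases abs_eq (by norm_num : (0:ℤ) ≤ 1) |>.1 hy with h | h <;> omega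
  clear hy
  refine ⟨?_, ?_, ?_, ?_, ?_⟩ <;> split_ifs <;> first | omega | simp

/-- Away from `m, m + 1, m + 2` the function `val` decreases along every nearest-neighbour step,
whatever the transition probabilities. -/
lemma val_upd_le {p : St} {y : ℤ} (hy : |y - p.1| = 1) (h0 : p.1 ≠ 0) (h1 : p.1 ≠ 1)
    (h2 : p.1 ≠ 2) : val (upd p y) ≤ val p := by
  by_cases hp : Consistent p
  swap
  · rw [val.eq_1 p, if_neg hp]; exact val_le _
  have hq := hp.upd hy
  rw [val_of hp, val_of hq]
  obtain ⟨x, a, b, c, d, e⟩ := p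
  dsimp only at hy h0 h1 h2 ⊢
  have hyx : y = x + 1 ∨ y = x - 1 := by
    rcases abs_eq (by norm_num : (0:ℤ) ≤ 1) |>.1 hy with h | h <;> omega
  simp only [Consistent] at hp
  by_cases hb : b = 0
  · rw [if_pos hb]
    obtain ⟨hx, rfl, rfl, rfl⟩ := hp.2.1 hb
    subst hb
    by_cases hy0 : y = 0
    · subst hy0
      have ha := hp.2.2.1 (by omega)
      have := uM_start a ha
      simp [upd, uSt]
      linarith
    · simp [upd, hy0]
  · rw [if_neg hb]
    by_cases he : e = 0
    swap
    · rw [if_neg he, ← val_of hq]; exact val_le _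
    rw [if_pos he]
    subst he
    have hx2 := hp.1 rfl
    have hx : x < 0 := by omega
    have hy3 : y ≠ 3 := by omega
    simp only [upd, uSt, hx, if_true, hy3, if_false, add_zero]
    rw [if_neg (by omega)]
    have hy1 : y ≠ 1 := by omega
    have hy2 : y ≠ 2 := by omega
    by_cases hy0 : y = 0
    · subst hy0; simp
    · have hyn : y < 0 := by omega
      simp only [hyn, hy0, hy1, hy2, if_true, if_false, add_zero]
      by_cases hym : y = -1
      · simp only [hym, if_true]; linarith [uM_anti a (b + 1) c d]
      · simp [hym]

/-- In these states `val` is maximal. -/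
lemma val_step_of_dead {p : St} (h : ¬ Consistent p ∨ (p.2.2.1 ≠ 0 ∧ p.2.2.2.2.2 ≠ 0)) (q : St) :
    val q ≤ val p := by
  rw [val.eq_1 p]
  rcases h with h | h
  · rw [if_neg h]; exact val_le _
  · rw [if_neg h.1, if_neg h.2, ite_self]; exact val_le _

lemma val_step_zero (a b c d e : ℕ) :
    ((a : ℝ) + 1) * val (upd (0, a, b, c, d, e) (-1)) + ((c : ℝ) + 1) * val (upd (0, a, b, c, d, e) 1)
      ≤ ((a : ℝ) + 1 + (c + 1)) * val (0, a, b, c, d, e) := by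
  by_cases h : ¬ Consistent (0, a, b, c, d, e) ∨ (b ≠ 0 ∧ e ≠ 0)
  · have h1 := val_step_of_dead h (upd (0, a, b, c, d, e) (-1))
    have h2 := val_step_of_dead h (upd (0, a, b, c, d, e) 1)
    nlinarith [a.cast_nonneg (α := ℝ), c.cast_nonneg (α := ℝ)]
  · rw [not_or, not_not] at h
    obtain ⟨hp, hbe⟩ := h
    have q1 := hp.upd (y := -1) (by norm_num)
    have q2 := hp.upd (y := 1) (by norm_num)
    have hp' := hp
    simp only [Consistent] at hp'
    have hb : b ≠ 0 := by intro hb; have := hp'.2.1 hb; omega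
    have he : e = 0 := by tauto
    subst he
    have := uM_step a b c d (by tauto)
    rw [val_of hp, val_of q1, val_of q2]
    simp [upd, uSt, hb]
    linarith

lemma val_step_one (a b c d e : ℕ) :
    ((b : ℝ) + 1) * val (upd (1, a, b, c, d, e) 0) + ((d : ℝ) + 1) * val (upd (1, a, b, c, d, e) 2)
      ≤ ((b : ℝ) + 1 + (d + 1)) * val (1, a, b, c, d, e) := by
  by_cases h : ¬ Consistent (1, a, b, c, d, e) ∨ (b ≠ 0 ∧ e ≠ 0)
  · have h1 := val_step_of_dead h (upd (1, a, b, c, d, e) 0)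
    have h2 := val_step_of_dead h (upd (1, a, b, c, d, e) 2)
    nlinarith [b.cast_nonneg (α := ℝ), d.cast_nonneg (α := ℝ)]
  · rw [not_or, not_not] at h
    obtain ⟨hp, hbe⟩ := h
    have q1 := hp.upd (y := 0) (by norm_num)
    have q2 := hp.upd (y := 2) (by norm_num)
    have hp' := hp
    simp only [Consistent] at hp'
    have hb : b ≠ 0 := by intro hb; have := hp'.2.1 hb; omega
    have he : e = 0 := by tauto
    subst he
    have := uR_step a b c d
    rw [val_of hp, val_of q1, val_of q2]
    simp [upd, uSt, hb]
    linarith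

lemma val_step_two (a b c d e : ℕ) :
    ((c : ℝ) + 1) * val (upd (2, a, b, c, d, e) 1) + ((e : ℝ) + 1) * val (upd (2, a, b, c, d, e) 3)
      ≤ ((c : ℝ) + 1 + (e + 1)) * val (2, a, b, c, d, e) := by
  by_cases h : ¬ Consistent (2, a, b, c, d, e) ∨ (b ≠ 0 ∧ e ≠ 0)
  · have h1 := val_step_of_dead h (upd (2, a, b, c, d, e) 1)
    have h2 := val_step_of_dead h (upd (2, a, b, c, d, e) 3)
    nlinarith [c.cast_nonneg (α := ℝ), e.cast_nonneg (α := ℝ)]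
  · rw [not_or, not_not] at h
    obtain ⟨hp, hbe⟩ := h
    have q1 := hp.upd (y := 1) (by norm_num)
    have q2 := hp.upd (y := 3) (by norm_num)
    have hp' := hp
    simp only [Consistent] at hp'
    have hb : b ≠ 0 := by intro hb; have := hp'.2.1 hb; omega
    have he : e = 0 := by tauto
    subst he
    have := uRR_step a b c d
    rw [val_of hp, val_of q1, val_of q2]
    simp [upd, uSt, hb]
    linarith

/-! ### The walk -/

/-- The number of visits of `X` to `w` up through time `n`. -/
def cnt {Ω : Type*} (X : ℕ → Ω → ℤ) (n : ℕ) (w : ℤ) (ω : Ω) : ℕ :=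
  ((Finset.range (n + 1)).filter (fun i => X i ω = w)).card

/-- The state of the walk at time `n`, relative to the level `m`. -/
def sta {Ω : Type*} (X : ℕ → Ω → ℤ) (m : ℤ) (n : ℕ) (ω : Ω) : St :=
  (X n ω - m, cnt X n (m - 1) ω, cnt X n m ω, cnt X n (m + 1) ω, cnt X n (m + 2) ω,
    cnt X n (m + 3) ω)

section Walk

variable {Ω : Type*} {mΩ : MeasurableSpace Ω} {μ : Measure Ω} {ℱ : Filtration ℕ mΩ}
  {X : ℕ → Ω → ℤ}

lemma occ_eq_cnt (n : ℕ) (w : ℤ) (ω : Ω) : occ X n w ω = cnt X n w ω + 1 := by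
  rw [occ, cnt, add_comm]

lemma cnt_succ (n : ℕ) (w : ℤ) (ω : Ω) :
    cnt X (n + 1) w ω = cnt X n w ω + if X (n + 1) ω = w then 1 else 0 := by
  simp only [cnt, Finset.card_filter]
  rw [Finset.sum_range_succ]

lemma cnt_ne_zero_iff (n : ℕ) (w : ℤ) (ω : Ω) : cnt X n w ω ≠ 0 ↔ ∃ i ≤ n, X i ω = w := by
  rw [cnt, Finset.card_ne_zero, Finset.Nonempty]
  simp only [Finset.mem_filter, Finset.mem_range, Nat.lt_succ_iff]

lemma sta_succ (m : ℤ) (n : ℕ) (ω : Ω) :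
    sta X m (n + 1) ω = upd (sta X m n ω) (X (n + 1) ω - m) := by
  have h1 : X (n + 1) ω = m - 1 ↔ X (n + 1) ω - m = -1 := by omega
  have h2 : X (n + 1) ω = m ↔ X (n + 1) ω - m = 0 := by omega
  have h3 : X (n + 1) ω = m + 1 ↔ X (n + 1) ω - m = 1 := by omega
  have h4 : X (n + 1) ω = m + 2 ↔ X (n + 1) ω - m = 2 := by omega
  have h5 : X (n + 1) ω = m + 3 ↔ X (n + 1) ω - m = 3 := by omega
  simp only [sta, upd, cnt_succ, if_congr h1 rfl rfl, if_congr h2 rfl rfl, if_congr h3 rfl rfl,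
    if_congr h4 rfl rfl, if_congr h5 rfl rfl]

lemma measurable_cnt (hX : Adapted ℱ X) (n : ℕ) (w : ℤ) :
    Measurable[ℱ n] (cnt X n w) := by
  have : cnt X n w = fun ω => ∑ i ∈ Finset.range (n + 1), if X i ω = w then 1 else 0 := by
    funext ω; simp only [cnt, Finset.card_filter]
  rw [this]
  refine Finset.measurable_sum _ fun i hi => ?_
  have hi' : i ≤ n := by simpa [Nat.lt_succ_iff] using hi
  have hXi : Measurable[ℱ n] (X i) := (hX i).mono (ℱ.mono hi') le_rfl
  exact Measurable.ite (hXi (measurableSet_singleton w)) measurable_const measurable_const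

lemma measurable_sta (hX : Adapted ℱ X) (m : ℤ) (n : ℕ) : Measurable[ℱ n] (sta X m n) := by
  have h0 : Measurable[ℱ n] (fun ω => X n ω - m) := (measurable_of_countable (· - m)).comp (hX n)
  exact h0.prodMk ((measurable_cnt hX n _).prodMk ((measurable_cnt hX n _).prodMk
    ((measurable_cnt hX n _).prodMk ((measurable_cnt hX n _).prodMk (measurable_cnt hX n _)))))

lemma stronglyMeasurable_comp_sta (hX : Adapted ℱ X) (m : ℤ) (n : ℕ) (φ : St → ℝ) :
    StronglyMeasurable[ℱ n] (fun ω => φ (sta X m n ω)) :=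
  ((measurable_of_countable φ).comp (measurable_sta hX m n)).stronglyMeasurable

lemma integrable_comp_sta [IsProbabilityMeasure μ] (hX : Adapted ℱ X) (m : ℤ) (n : ℕ)
    (φ : St → ℝ) (K : ℝ) (hK : ∀ p, |φ p| ≤ K) : Integrable (fun ω => φ (sta X m n ω)) μ :=
  Integrable.of_bound ((stronglyMeasurable_comp_sta hX m n φ).mono (ℱ.le n)).aestronglyMeasurable K
    (ae_of_all _ fun _ => hK _)

lemma measurable_step (hX : Adapted ℱ X) (n : ℕ) (x : ℤ) :
    Measurable (fun ω => if X (n + 1) ω = x then (1 : ℝ) else 0) :=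
  Measurable.ite (((hX (n + 1)).mono (ℱ.le _) le_rfl) (measurableSet_singleton x))
    measurable_const measurable_const

lemma integrable_step [IsProbabilityMeasure μ] (hX : Adapted ℱ X) (n : ℕ) (x : ℤ) :
    Integrable (fun ω => if X (n + 1) ω = x then (1 : ℝ) else 0) μ :=
  Integrable.of_bound (measurable_step hX n x).aestronglyMeasurable 1
    (ae_of_all _ fun ω => by split_ifs <;> simp)

/-- The conditional probability, given the past up to time `n`, of a step to `x`. -/
noncomputable def transProb (X : ℕ → Ω → ℤ) (n : ℕ) (x : ℤ) (ω : Ω) : ℝ :=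
  if |x - X n ω| = 1 then
    occ X n x ω / (occ X n (X n ω - 1) ω + occ X n (X n ω + 1) ω) else 0

lemma integrable_comp_mul_step [IsProbabilityMeasure μ] (hX : Adapted ℱ X) (m : ℤ) (n : ℕ)
    (x : ℤ) (φ : St → ℝ) (K : ℝ) (hK : ∀ p, |φ p| ≤ K) :
    Integrable (fun ω => φ (sta X m n ω) * if X (n + 1) ω = x then (1 : ℝ) else 0) μ :=
  (integrable_step hX n x).bdd_mul (c := K)
    ((stronglyMeasurable_comp_sta hX m n φ).mono (ℱ.le n)).aestronglyMeasurable
    (ae_of_all _ fun _ => hK _)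

lemma condExp_mul_step [IsProbabilityMeasure μ] {v : ℤ} (hX : IsVRRW μ ℱ v X) (m : ℤ) (n : ℕ)
    (x : ℤ) (φ : St → ℝ) (K : ℝ) (hK : ∀ p, |φ p| ≤ K) :
    μ[fun ω => φ (sta X m n ω) * if X (n + 1) ω = x then (1 : ℝ) else 0 | ℱ n] =ᵐ[μ]
      fun ω => φ (sta X m n ω) * transProb X n x ω := by
  have h1 := condExp_stronglyMeasurable_mul_of_bound (μ := μ) (ℱ.le n)
    (stronglyMeasurable_comp_sta hX.1 m n φ) (integrable_step hX.1 n x) K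
    (ae_of_all _ fun _ => hK _)
  refine h1.trans ?_
  filter_upwards [hX.2.2 n x] with ω hω
  simp only [Pi.mul_apply, hω, transProb]

lemma ae_nearest_neighbour [IsProbabilityMeasure μ] {v : ℤ} (hX : IsVRRW μ ℱ v X) (n : ℕ) :
    ∀ᵐ ω ∂μ, |X (n + 1) ω - X n ω| = 1 := by
  have key : ∀ x : ℤ, ∀ᵐ ω ∂μ, X (n + 1) ω = x → |x - X n ω| = 1 := by
    intro x
    let φ : St → ℝ := fun p => if |x - p.1| = 1 then 0 else 1
    have hφ : ∀ p, |φ p| ≤ 1 := fun p => by simp only [φ]; split_ifs <;> simp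
    have h1 := condExp_mul_step hX 0 n x φ 1 hφ
    have h2 := integrable_comp_mul_step (μ := μ) hX.1 0 n x φ 1 hφ
    have h3 : ∫ ω, φ (sta X 0 n ω) * (if X (n + 1) ω = x then (1 : ℝ) else 0) ∂μ = 0 := by
      rw [← integral_condExp (ℱ.le n), integral_congr_ae h1, integral_eq_zero_of_ae]
      refine ae_of_all _ fun ω => ?_
      simp only [φ, sta, transProb, sub_zero, Pi.zero_apply]
      split_ifs <;> simp
    rw [integral_eq_zero_iff_of_nonneg _ h2] at h3
    · filter_upwards [h3] with ω hω hx
      by_contra hne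
      simp [φ, sta, hx, hne] at hω
    · intro ω
      simp only [φ, Pi.zero_apply]
      split_ifs <;> simp
  filter_upwards [ae_all_iff.2 key] with ω hω
  exact hω _ rfl

/-- The increment of `val` caused by a step to `y`, in states at relative position `j`. -/
noncomputable def incr (j y : ℤ) (p : St) : ℝ := if p.1 = j then val (upd p y) - val p else 0

lemma abs_incr_le (j y : ℤ) (p : St) : |incr j y p| ≤ 2 := by
  unfold incr
  split_ifs
  · refine (abs_sub _ _).trans ?_
    linarith [abs_val_le (upd p y), abs_val_le p]
  · simp

/-- The increment of `val` along the walk between the times `n` and `n + 1`, on the event that the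
walk is at `m + j` at time `n` and moves to a neighbour. -/
noncomputable def incrAt (X : ℕ → Ω → ℤ) (m : ℤ) (n : ℕ) (j : ℤ) (ω : Ω) : ℝ :=
  incr j (j - 1) (sta X m n ω) * (if X (n + 1) ω = m + (j - 1) then (1 : ℝ) else 0)
    + incr j (j + 1) (sta X m n ω) * (if X (n + 1) ω = m + (j + 1) then (1 : ℝ) else 0)

lemma integrable_incrAt [IsProbabilityMeasure μ] (hX : Adapted ℱ X) (m : ℤ) (n : ℕ) (j : ℤ) :
    Integrable (incrAt X m n j) μ :=
  (integrable_comp_mul_step hX m n _ _ 2 (abs_incr_le _ _)).add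
    (integrable_comp_mul_step hX m n _ _ 2 (abs_incr_le _ _))

/-- A weighted one-step inequality at `m + j`, with the occupation numbers as weights, says that
`val` decreases in mean under a step from `m + j`. -/
lemma integral_incrAt_nonpos [IsProbabilityMeasure μ] {v : ℤ} (hX : IsVRRW μ ℱ v X) (m : ℤ)
    (n : ℕ) (j : ℤ)
    (hj : ∀ ω, X n ω = m + j →
      occ X n (m + (j - 1)) ω * val (upd (sta X m n ω) (j - 1))
        + occ X n (m + (j + 1)) ω * val (upd (sta X m n ω) (j + 1))
      ≤ (occ X n (m + (j - 1)) ω + occ X n (m + (j + 1)) ω) * val (sta X m n ω)) :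
    ∫ ω, incrAt X m n j ω ∂μ ≤ 0 := by
  unfold incrAt
  rw [integral_add (integrable_comp_mul_step hX.1 m n _ _ 2 (abs_incr_le _ _))
    (integrable_comp_mul_step hX.1 m n _ _ 2 (abs_incr_le _ _))]
  rw [← integral_condExp (ℱ.le n), ← integral_condExp (μ := μ) (f := fun ω =>
    incr j (j + 1) (sta X m n ω) * _) (ℱ.le n), ← integral_add integrable_condExp
    integrable_condExp]
  refine integral_nonpos_of_ae ?_
  filter_upwards [condExp_mul_step hX m n (m + (j - 1)) _ 2 (abs_incr_le j (j - 1)),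
    condExp_mul_step hX m n (m + (j + 1)) _ 2 (abs_incr_le j (j + 1))] with ω h1 h2
  rw [h1, h2, Pi.zero_apply]
  by_cases hω : X n ω = m + j
  swap
  · have : (sta X m n ω).1 ≠ j := by simp only [sta]; omega
    simp [incr, this]
  · have e0 : (sta X m n ω).1 = j := by simp only [sta]; omega
    have e1 : |m + (j - 1) - X n ω| = 1 := by rw [hω]; ring_nf; simp
    have e2 : |m + (j + 1) - X n ω| = 1 := by rw [hω]; ring_nf; simp
    have e3 : X n ω - 1 = m + (j - 1) := by omega
    have e4 : X n ω + 1 = m + (j + 1) := by omega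
    have h := hj ω hω
    have hp1 : 0 < occ X n (m + (j - 1)) ω := by rw [occ_eq_cnt]; positivity
    have hp2 : 0 < occ X n (m + (j + 1)) ω := by rw [occ_eq_cnt]; positivity
    simp only [incr, transProb, e0, e1, e2, e3, e4, if_true]
    rw [← mul_div_assoc, ← mul_div_assoc, ← add_div]
    refine div_nonpos_of_nonpos_of_nonneg ?_ (by positivity)
    linarith

lemma integral_val_succ_le [IsProbabilityMeasure μ] {v : ℤ} (hX : IsVRRW μ ℱ v X) (m : ℤ)
    (n : ℕ) : ∫ ω, val (sta X m (n + 1) ω) ∂μ ≤ ∫ ω, val (sta X m n ω) ∂μ := by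
  have i0 := integrable_comp_sta (μ := μ) hX.1 m n val 1 abs_val_le
  have i1 := integrable_comp_sta (μ := μ) hX.1 m (n + 1) val 1 abs_val_le
  have j0 := integrable_incrAt (μ := μ) hX.1 m n 0
  have j1 := integrable_incrAt (μ := μ) hX.1 m n 1
  have j2 := integrable_incrAt (μ := μ) hX.1 m n 2
  have k0 := integral_incrAt_nonpos hX m n 0 (by
    intro ω hω
    have hs : sta X m n ω = (0, (sta X m n ω).2) := by ext1 <;> simp [sta, hω]
    rw [hs, show m + ((0 : ℤ) - 1) = m - 1 by ring, show m + ((0 : ℤ) + 1) = m + 1 by ring,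
      show (0 : ℤ) - 1 = -1 by norm_num, show (0 : ℤ) + 1 = 1 by norm_num]
    simp only [occ_eq_cnt]
    exact val_step_zero _ _ _ _ _)
  have k1 := integral_incrAt_nonpos hX m n 1 (by
    intro ω hω
    have hs : sta X m n ω = (1, (sta X m n ω).2) := by ext1 <;> simp [sta, hω]
    rw [hs, show m + ((1 : ℤ) - 1) = m by ring, show m + ((1 : ℤ) + 1) = m + 2 by ring,
      show (1 : ℤ) - 1 = 0 by norm_num, show (1 : ℤ) + 1 = 2 by norm_num]
    simp only [occ_eq_cnt]
    exact val_step_one _ _ _ _ _)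
  have k2 := integral_incrAt_nonpos hX m n 2 (by
    intro ω hω
    have hs : sta X m n ω = (2, (sta X m n ω).2) := by ext1 <;> simp [sta, hω]
    rw [hs, show m + ((2 : ℤ) - 1) = m + 1 by ring, show m + ((2 : ℤ) + 1) = m + 3 by ring,
      show (2 : ℤ) - 1 = 1 by norm_num, show (2 : ℤ) + 1 = 3 by norm_num]
    simp only [occ_eq_cnt]
    exact val_step_two _ _ _ _ _)
  have hle : ∫ ω, (val (sta X m (n + 1) ω) - val (sta X m n ω)) ∂μ
      ≤ ∫ ω, (incrAt X m n 0 ω + incrAt X m n 1 ω + incrAt X m n 2 ω) ∂μ := by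
    refine integral_mono_ae (i1.sub i0) ((j0.add j1).add j2) ?_
    filter_upwards [ae_nearest_neighbour hX n] with ω hω
    simp only [sta_succ]
    have hy : |(X (n + 1) ω - m) - (sta X m n ω).1| = 1 := by
      simp only [sta]; rw [← hω]; congr 1; ring
    have hx : X (n + 1) ω - m = (sta X m n ω).1 + 1 ∨ X (n + 1) ω - m = (sta X m n ω).1 - 1 := by
      rcases abs_eq (by norm_num : (0:ℤ) ≤ 1) |>.1 hy with h | h <;> omega
    have hX1 : ∀ k : ℤ, X (n + 1) ω = m + k ↔ X (n + 1) ω - m = k := fun k => by omega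
    simp only [incrAt, incr, hX1]
    generalize sta X m n ω = p at *
    generalize X (n + 1) ω - m = y at *
    by_cases h0 : p.1 = 0
    · rcases hx with hx | hx <;> rw [h0] at hx <;> subst hx <;> simp [h0]
    by_cases h1 : p.1 = 1
    · rcases hx with hx | hx <;> rw [h1] at hx <;> subst hx <;> simp [h1]
    by_cases h2 : p.1 = 2
    · rcases hx with hx | hx <;> rw [h2] at hx <;> subst hx <;> simp [h2]
    · simpa [h0, h1, h2] using val_upd_le hy h0 h1 h2
  have j01 : Integrable (fun ω => incrAt X m n 0 ω + incrAt X m n 1 ω) μ := j0.add j1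
  rw [integral_sub i1 i0, integral_add j01 j2, integral_add j0 j1] at hle
  linarith

lemma integral_val_nonpos [IsProbabilityMeasure μ] (hX : IsVRRW μ ℱ 0 X) {m : ℤ} (hm : 0 < m)
    (n : ℕ) : ∫ ω, val (sta X m n ω) ∂μ ≤ 0 := by
  induction n with
  | zero =>
    refine integral_nonpos fun ω => ?_
    have h0 := hX.2.1 ω
    have hc : ∀ w, cnt X 0 w ω = if w = 0 then 1 else 0 := by
      intro w
      simp [cnt, Finset.filter_singleton, h0, eq_comm (a := w)]
      split_ifs <;> rfl
    have hs : sta X m 0 ω = (-m, if m = 1 then 1 else 0, 0, 0, 0, 0) := by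
      simp only [sta, hc, h0, zero_sub]
      rw [if_neg hm.ne', if_neg (by omega : m + 1 ≠ 0), if_neg (by omega : m + 2 ≠ 0),
        if_neg (by omega : m + 3 ≠ 0)]
      simp only [sub_eq_zero]
    have hcons : Consistent (sta X m 0 ω) := by
      rw [hs]
      simp only [Consistent]
      refine ⟨by omega, by intro _; refine ⟨by omega, ?_, ?_, ?_⟩ <;> trivial, ?_, by omega, by omega⟩
      intro h
      rw [if_pos (by omega)]
    rw [val_of hcons, hs]
    simp
  | succ n ih => exact (integral_val_succ_le hX m n).trans ih

lemma measure_reach_le [IsProbabilityMeasure μ] (hX : IsVRRW μ ℱ 0 X) {m : ℤ} (hm : 0 < m)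
    (n : ℕ) :
    μ.real {ω | cnt X n m ω ≠ 0 ∧ cnt X n (m + 3) ω ≠ 0} ≤ 50 / 51 * μ.real {ω | cnt X n m ω ≠ 0} := by
  have mc : ∀ w, Measurable (cnt X n w) := fun w => (measurable_cnt hX.1 n w).mono (ℱ.le n) le_rfl
  have ms1 : MeasurableSet {ω | cnt X n m ω ≠ 0} := mc m (MeasurableSet.of_discrete (s := {0}ᶜ))
  have ms2 : MeasurableSet {ω | cnt X n m ω ≠ 0 ∧ cnt X n (m + 3) ω ≠ 0} :=
    ms1.inter (mc (m + 3) (MeasurableSet.of_discrete (s := {0}ᶜ)))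
  have h := integral_val_nonpos hX hm n
  have i1 : Integrable ({ω | cnt X n m ω ≠ 0 ∧ cnt X n (m + 3) ω ≠ 0}.indicator
    (fun _ => (1 : ℝ))) μ := (integrable_const 1).indicator ms2
  have i2 : Integrable (fun ω => 50 / 51 * {ω | cnt X n m ω ≠ 0}.indicator (fun _ => (1 : ℝ)) ω) μ :=
    ((integrable_const 1).indicator ms1).const_mul _
  have h2 : ∫ ω, ({ω | cnt X n m ω ≠ 0 ∧ cnt X n (m + 3) ω ≠ 0}.indicator (fun _ => (1 : ℝ)) ω
      - 50 / 51 * {ω | cnt X n m ω ≠ 0}.indicator (fun _ => (1 : ℝ)) ω) ∂μ ≤ 0 := by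
    refine le_trans (integral_mono (i1.sub i2)
      (integrable_comp_sta hX.1 m n val 1 abs_val_le) fun ω => ?_) h
    have := le_val (sta X m n ω)
    simp only [sta] at this
    simp only [Set.indicator, Set.mem_ofPred_eq]
    exact this
  rw [integral_sub i1 i2, integral_const_mul, integral_indicator_const _ ms2,
    integral_indicator_const _ ms1] at h2
  simp only [smul_eq_mul, mul_one] at h2
  linarith

end Walk

/-- **Lemma (dominates)**: For VRRW on `ℤ` started at `0`, there is `ε > 0` such that for
every integer `m > 0`, `P(m+3 ∈ R and m ∈ R) ≤ (1 − ε) P(m ∈ R)`, i.e. the conditional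
probability of ever reaching `m + 3` given that `m` is reached is at most `1 − ε`,
uniformly in `m`. -/
theorem vrrw_reach_three_more
    {Ω : Type*} {mΩ : MeasurableSpace Ω} (μ : Measure Ω) [IsProbabilityMeasure μ]
    (ℱ : Filtration ℕ mΩ) (X : ℕ → Ω → ℤ) (hX : IsVRRW μ ℱ 0 X) :
    ∃ ε : ℝ, 0 < ε ∧ ∀ m : ℤ, 0 < m →
      (μ {ω | (∃ n, X n ω = m + 3) ∧ (∃ n, X n ω = m)}).toReal
        ≤ (1 - ε) * (μ {ω | ∃ n, X n ω = m}).toReal := by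
  refine ⟨1 / 51, by norm_num, fun m hm => ?_⟩
  let S : ℕ → Set Ω := fun n => {ω | cnt X n m ω ≠ 0 ∧ cnt X n (m + 3) ω ≠ 0}
  have hS : {ω | (∃ n, X n ω = m + 3) ∧ (∃ n, X n ω = m)} = ⋃ n, S n := by
    ext ω
    simp only [S, cnt_ne_zero_iff, Set.mem_ofPred_eq, Set.mem_iUnion]
    constructor
    · rintro ⟨⟨i, hi⟩, ⟨k, hk⟩⟩
      exact ⟨max i k, ⟨k, le_max_right _ _, hk⟩, ⟨i, le_max_left _ _, hi⟩⟩
    · rintro ⟨_, ⟨k, _, hk⟩, ⟨i, _, hi⟩⟩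
      exact ⟨⟨i, hi⟩, ⟨k, hk⟩⟩
  have hmono : Monotone S := by
    intro n n' hn ω
    simp only [S, cnt_ne_zero_iff, Set.mem_ofPred_eq]
    rintro ⟨⟨k, hk, hk'⟩, ⟨i, hi, hi'⟩⟩
    exact ⟨⟨k, hk.trans hn, hk'⟩, ⟨i, hi.trans hn, hi'⟩⟩
  have hlim : Tendsto (fun n => (μ (S n)).toReal) atTop (nhds (μ (⋃ n, S n)).toReal) :=
    (ENNReal.tendsto_toReal (measure_ne_top _ _)).comp (tendsto_measure_iUnion_atTop hmono)
  rw [hS]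
  refine le_of_tendsto' hlim fun n => ?_
  refine (measure_reach_le hX hm n).trans ?_
  have hsub : μ.real {ω | cnt X n m ω ≠ 0} ≤ μ.real {ω | ∃ n, X n ω = m} := by
    refine measureReal_mono fun ω hω => ?_
    obtain ⟨i, _, hi⟩ := (cnt_ne_zero_iff n m ω).1 hω
    exact ⟨i, hi⟩
  change _ ≤ _ * μ.real _
  linarith
end
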